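/- arXiv:1302.6004 — 2 statements merged into one kernel-verified Lean document; each statement's English description precedes it below -/
import Mathlib

section
/- Let S ⊆ [n]² be admissible, Ā ∈ M_S and b̄ ∈ ℝⁿ with ‖Ā‖_max ≤ 1 and ‖b̄‖_∞ ≤ 1, σ > 0, and let A ~ N_S(Ā, σ²Id) and b ~ N(b̄, σ²Id) be independent. Then for every real t > 2|S|, Prob{ c(A,b) > t } ≤ ((1 + σ)/σ)·(4n|S|²/(t − 2|S|))·√(2/π), where c(A,b) = max_{k ∈ [n]} c_k(A,b) and c_k(A,b) is the componentwise condition number of the map (A,b) ↦ (A⁻¹b)_k at (A,b) (A is almost surely invertible). -/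
open MeasureTheory ProbabilityTheory
open scoped ENNReal

/-- Componentwise "distance" `d(u,v) = ‖(u−v)/v‖_∞`, valued in `[0,∞]`:
the `i`-th component of the quotient is `|u i − v i|/|v i|` if `v i ≠ 0`,
`0` if `u i = v i = 0`, and `∞` otherwise. -/
noncomputable def cwDist {ι : Type*} (u v : ι → ℝ) : ℝ≥0∞ :=
  ⨆ i, if v i ≠ 0 then ENNReal.ofReal (|u i - v i| / |v i|)
       else if u i = v i then 0 else ⊤

/-- Componentwise condition number of `F : D ⊆ ℝ^ι → ℝ^κ` at `a`:
`c^F(a) = lim_{δ→0} sup { d(F x, F a)/d(x,a) : x ∈ D, d(x,a) ≤ δ, x ≠ a }`,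
the limit being an infimum since the sup is monotone in `δ`. -/
noncomputable def cwCond {ι κ : Type*} (D : Set (ι → ℝ)) (F : (ι → ℝ) → κ → ℝ)
    (a : ι → ℝ) : ℝ≥0∞ :=
  ⨅ δ ∈ Set.Ioi (0 : ℝ≥0∞),
    ⨆ x ∈ {x ∈ D | cwDist x a ≤ δ ∧ x ≠ a}, cwDist (F x) (F a) / cwDist x a

/-- A matrix viewed as a point of `ℝ^(n×n)`. -/
def matToFun {n : ℕ} (A : Matrix (Fin n) (Fin n) ℝ) : Fin n × Fin n → ℝ :=
  fun p => A p.1 p.2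

/-- A point of `ℝ^(n×n)` viewed as a matrix. -/
def funToMat {n : ℕ} (x : Fin n × Fin n → ℝ) : Matrix (Fin n) (Fin n) ℝ :=
  Matrix.of fun i j => x (i, j)

/-- The componentwise condition number `c^det(A)` of determinant computation at `A`. -/
noncomputable def cDet {n : ℕ} (A : Matrix (Fin n) (Fin n) ℝ) : ℝ≥0∞ :=
  cwCond Set.univ (fun x (_ : Unit) => (funToMat x).det) (matToFun A)

/-- The componentwise condition number `c†_{kl}(A)` of the map `A ↦ (A⁻¹)_{kl}` at `A`. -/
noncomputable def cInv {n : ℕ} (k l : Fin n) (A : Matrix (Fin n) (Fin n) ℝ) : ℝ≥0∞ :=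
  cwCond {x | IsUnit (funToMat x).det}
    (fun x (_ : Unit) => (funToMat x)⁻¹ k l) (matToFun A)

/-- `c†(A) = max_{k,l} c†_{kl}(A)`. -/
noncomputable def cInvMax {n : ℕ} (A : Matrix (Fin n) (Fin n) ℝ) : ℝ≥0∞ :=
  ⨆ k, ⨆ l, cInv k l A

/-- A pair (matrix, right-hand side) viewed as a point of `ℝ^(n×n+n)`. -/
def pairToFun {n : ℕ} (A : Matrix (Fin n) (Fin n) ℝ) (b : Fin n → ℝ) :
    (Fin n × Fin n) ⊕ Fin n → ℝ :=
  Sum.elim (fun p => A p.1 p.2) b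

def funToMat' {n : ℕ} (x : (Fin n × Fin n) ⊕ Fin n → ℝ) : Matrix (Fin n) (Fin n) ℝ :=
  Matrix.of fun i j => x (Sum.inl (i, j))

def funToVec {n : ℕ} (x : (Fin n × Fin n) ⊕ Fin n → ℝ) : Fin n → ℝ :=
  fun i => x (Sum.inr i)

/-- The componentwise condition number `c_k(A,b)` of the map `(A,b) ↦ (A⁻¹b)_k` at `(A,b)`. -/
noncomputable def cLin {n : ℕ} (k : Fin n) (A : Matrix (Fin n) (Fin n) ℝ)
    (b : Fin n → ℝ) : ℝ≥0∞ :=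
  cwCond {x | IsUnit (funToMat' x).det}
    (fun x (_ : Unit) => (Matrix.mulVec (funToMat' x)⁻¹ (funToVec x)) k) (pairToFun A b)

/-- `c(A,b) = max_k c_k(A,b)`. -/
noncomputable def cLinMax {n : ℕ} (A : Matrix (Fin n) (Fin n) ℝ) (b : Fin n → ℝ) : ℝ≥0∞ :=
  ⨆ k, cLin k A b

instance matrixMeasurableSpace {n : ℕ} : MeasurableSpace (Matrix (Fin n) (Fin n) ℝ) :=
  inferInstanceAs (MeasurableSpace (Fin n → Fin n → ℝ))

/-- The distribution `N_S(Ā, σ²Id)` of a random sparse matrix: the entries `a_{ij}` with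
`(i,j) ∈ S` are independent Gaussians `N(ā_{ij}, σ²)`, and `a_{ij} = 0` for `(i,j) ∉ S`. -/
noncomputable def sparseGaussian {n : ℕ} (S : Finset (Fin n × Fin n))
    (Abar : Matrix (Fin n) (Fin n) ℝ) (σ : ℝ) : Measure (Matrix (Fin n) (Fin n) ℝ) :=
  (Measure.pi fun p : S => gaussianReal (Abar p.1.1 p.1.2) ⟨σ ^ 2, sq_nonneg σ⟩).map
    fun g => Matrix.of fun i j => if h : (i, j) ∈ S then g ⟨(i, j), h⟩ else 0

/-- The distribution `N(b̄, σ²Id)` on `ℝⁿ`: independent Gaussian entries `N(b̄_i, σ²)`. -/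
noncomputable def vecGaussian {n : ℕ} (bbar : Fin n → ℝ) (σ : ℝ) : Measure (Fin n → ℝ) :=
  Measure.pi fun i => gaussianReal (bbar i) ⟨σ ^ 2, sq_nonneg σ⟩

/-- `S ⊆ [n]²` is admissible when `M_S` contains an invertible matrix. -/
def Admissible {n : ℕ} (S : Finset (Fin n × Fin n)) : Prop :=
  ∃ B : Matrix (Fin n) (Fin n) ℝ, (∀ i j, (i, j) ∉ S → B i j = 0) ∧ IsUnit B.det

/-- Replacing one entry changes the determinant affinely. -/
theorem det_set_entry {n : ℕ} (M : Matrix (Fin n) (Fin n) ℝ) (i j : Fin n) (y : ℝ) :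
    (M.updateRow i (Function.update (M i) j y)).det
      = M.det + (y - M i j) * M.adjugate j i := by
  have h : Function.update (M i) j y = M i + (y - M i j) • Pi.single j 1 := by
    ext l
    by_cases hl : l = j
    · subst hl; simp
    · simp [hl]
  rw [h, Matrix.det_updateRow_add, Matrix.det_updateRow_smul, Matrix.updateRow_eq_self,
    Matrix.adjugate_apply]

theorem adj_set_entry {n : ℕ} (M : Matrix (Fin n) (Fin n) ℝ) (i j : Fin n) (y : ℝ) :
    (M.updateRow i (Function.update (M i) j y)).adjugate j i = M.adjugate j i := by
  rw [Matrix.adjugate_apply, Matrix.adjugate_apply]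
  congr 1
  ext a b
  by_cases ha : a = i
  · subst ha; simp
  · simp [Matrix.updateRow_apply, ha]

theorem measurable_det_of {Ω : Type*} [MeasurableSpace Ω] {n : ℕ}
    (M : Ω → Matrix (Fin n) (Fin n) ℝ) (h : ∀ i j, Measurable fun ω => M ω i j) :
    Measurable fun ω => (M ω).det := by
  simp only [Matrix.det_apply']
  refine Finset.measurable_sum _ fun p _ => ?_
  exact measurable_const.mul (Finset.measurable_prod _ fun i _ => h _ _)

theorem measurable_adj_of {Ω : Type*} [MeasurableSpace Ω] {n : ℕ}
    (M : Ω → Matrix (Fin n) (Fin n) ℝ) (h : ∀ i j, Measurable fun ω => M ω i j) (i j : Fin n) :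
    Measurable fun ω => (M ω).adjugate i j := by
  simp only [Matrix.adjugate_apply]
  refine measurable_det_of _ fun a b => ?_
  by_cases ha : a = j
  · subst ha; simp
  · simpa [Matrix.updateRow_apply, ha] using h a b

/-- Slicing bound for finite products of probability measures. -/
theorem pi_le_of_slice {ι : Type*} [Fintype ι] [DecidableEq ι] (μ : ι → Measure ℝ)
    [∀ i, IsProbabilityMeasure (μ i)] (E : Set (ι → ℝ)) (hE : MeasurableSet E) (p : ι)
    (c : ℝ≥0∞) (h : ∀ g : ι → ℝ, μ p {y | Function.update g p y ∈ E} ≤ c) :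
    Measure.pi μ E ≤ c := by
  rw [← lintegral_indicator_one hE]
  have hm : Measurable (E.indicator (1 : (ι → ℝ) → ℝ≥0∞)) := measurable_one.indicator hE
  have h2 : ∫⁻ a, E.indicator 1 a ∂(Measure.pi μ) ≤ ∫⁻ a, c ∂(Measure.pi μ) := by
    refine lintegral_le_of_lmarginal_le {p} hm measurable_const ?_
    intro x
    rw [lmarginal_singleton, lmarginal_singleton]
    simp only [lintegral_const, measure_univ, mul_one]
    refine le_trans (le_of_eq ?_) (h x)
    have hms : MeasurableSet {y | Function.update x p y ∈ E} :=
      (measurable_update x) hE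
    rw [← lintegral_indicator_one hms]
    rfl
  simpa using h2

theorem pdf_bound (m σ y : ℝ) (hm : |m| ≤ 1) (hσ : 0 < σ) (v : NNReal) (hvσ : (v : ℝ) = σ ^ 2) :
    |y| * gaussianPDFReal m v y ≤ (1 + σ) / (σ * Real.sqrt (2 * Real.pi)) := by
  have hs : Real.sqrt (2 * Real.pi * (σ ^ 2)) = σ * Real.sqrt (2 * Real.pi) := by
    rw [Real.sqrt_mul (by positivity), Real.sqrt_sq hσ.le, mul_comm]
  have hpos : 0 < σ * Real.sqrt (2 * Real.pi) := by positivity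
  unfold gaussianPDFReal
  rw [hvσ, hs]
  set u := |y - m| / σ with hu
  have hu0 : 0 ≤ u := by positivity
  have hexp : -(y - m) ^ 2 / (2 * σ ^ 2) = -(u ^ 2 / 2) := by
    rw [hu, div_pow, sq_abs]; field_simp
  rw [hexp]
  have hy : |y| ≤ 1 + σ * u := by
    have h1 : σ * u = |y - m| := by rw [hu]; field_simp
    rw [h1]
    calc |y| = |m + (y - m)| := by ring_nf
      _ ≤ |m| + |y - m| := abs_add_le _ _
      _ ≤ _ := by linarith
  have he : 1 + u ^ 2 / 2 ≤ Real.exp (u ^ 2 / 2) := by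
    have := Real.add_one_le_exp (u ^ 2 / 2); linarith
  have hkey : |y| * Real.exp (-(u ^ 2 / 2)) ≤ 1 + σ := by
    rw [Real.exp_neg, ← div_eq_mul_inv, div_le_iff₀ (Real.exp_pos _)]
    calc |y| ≤ 1 + σ * u := hy
      _ ≤ (1 + σ) * (1 + u ^ 2 / 2) := by nlinarith [sq_nonneg (u - 1), sq_nonneg u]
      _ ≤ _ := by gcongr
  rw [le_div_iff₀ hpos]
  calc |y| * ((σ * √(2 * Real.pi))⁻¹ * Real.exp (-(u ^ 2 / 2))) * (σ * √(2 * Real.pi))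
      = |y| * Real.exp (-(u ^ 2 / 2)) := by field_simp
    _ ≤ _ := hkey

theorem gauss_interval (m σ : ℝ) (hm : |m| ≤ 1) (hσ : 0 < σ) (v : NNReal) (hvσ : (v : ℝ) = σ ^ 2) (a b lo : ℝ) (hlo : 0 < lo)
    (hab : ∀ y ∈ Set.Ioo a b, lo ≤ |y|) :
    gaussianReal m v (Set.Ioo a b)
      ≤ ENNReal.ofReal ((1 + σ) / (σ * Real.sqrt (2 * Real.pi)) / lo * (b - a)) := by
  have hv : v ≠ 0 := by
    intro h
    rw [h] at hvσ
    have : 0 < σ ^ 2 := by positivity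
    rw [← hvσ] at this
    simp at this
  rw [gaussianReal_apply _ hv]
  have hK : 0 ≤ (1 + σ) / (σ * Real.sqrt (2 * Real.pi)) := by positivity
  calc ∫⁻ x in Set.Ioo a b, gaussianPDF m v x
      ≤ ∫⁻ x in Set.Ioo a b, ENNReal.ofReal ((1 + σ) / (σ * Real.sqrt (2 * Real.pi)) / lo) := by
        refine setLIntegral_mono' measurableSet_Ioo fun y hy => ?_
        refine ENNReal.ofReal_le_ofReal ?_
        rw [le_div_iff₀ hlo]
        refine le_trans ?_ (pdf_bound m σ y hm hσ v hvσ)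
        rw [mul_comm]
        exact mul_le_mul_of_nonneg_right (hab y hy) (gaussianPDFReal_nonneg _ _ _)
    _ = _ := by
        rw [setLIntegral_const, Real.volume_Ioo, ← ENNReal.ofReal_mul (by positivity)]

theorem gauss_ratio (m σ : ℝ) (hm : |m| ≤ 1) (hσ : 0 < σ) (v : NNReal) (hvσ : (v : ℝ) = σ ^ 2) (s C D : ℝ) (hs : 1 < s) :
    gaussianReal m v {y | s * |D + y * C| < |y * C|}
      ≤ ENNReal.ofReal ((1 + σ) / σ * Real.sqrt (2 / Real.pi) / (s - 1)) := by
  by_cases hC : C = 0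
  · have : {y : ℝ | s * |D + y * C| < |y * C|} = ∅ := by
      ext y
      simp [hC]
      positivity
    rw [this]; simp
  have hs1 : 0 < s - 1 := by linarith
  have hs2 : 0 < s + 1 := by linarith
  set w := -(D / C) with hw
  have hset : ∀ y, s * |D + y * C| < |y * C| ↔ s * |y - w| < |y| := by
    intro y
    have : D + y * C = (y - w) * C := by rw [hw]; field_simp; try ring
    rw [this, abs_mul, abs_mul, ← mul_assoc]
    exact mul_lt_mul_iff_left₀ (abs_pos.mpr hC)
  have hconst : (1 + σ) / (σ * Real.sqrt (2 * Real.pi)) * (2 / (s - 1))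
      = (1 + σ) / σ * Real.sqrt (2 / Real.pi) / (s - 1) := by
    have h1 : Real.sqrt (2 / Real.pi) = 2 / Real.sqrt (2 * Real.pi) := by
      rw [Real.sqrt_eq_iff_mul_self_eq (by positivity) (by positivity)]
      rw [div_mul_div_comm, Real.mul_self_sqrt (by positivity)]
      field_simp
    rw [h1]; field_simp
  rw [← hconst]
  rcases lt_trichotomy w 0 with hw0 | hw0 | hw0
  · have hsub : {y | s * |D + y * C| < |y * C|} ⊆ Set.Ioo (w * s / (s - 1)) (w * s / (s + 1)) := by
      intro y hy
      have hy' := (hset y).1 hy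
      have hyneg : y < 0 := by
        by_contra hcon
        push Not at hcon
        rw [abs_of_nonneg (by linarith : 0 ≤ y - w), abs_of_nonneg hcon] at hy'
        nlinarith
      rw [abs_of_neg hyneg] at hy'
      have h1 := le_abs_self (y - w)
      have h2 := neg_abs_le (y - w)
      constructor
      · rw [div_lt_iff₀ hs1]; nlinarith
      · rw [lt_div_iff₀ hs2]; nlinarith
    refine (measure_mono hsub).trans ?_
    have hlo : 0 < -w * s / (s + 1) := by
      have : 0 < -w := by linarith
      positivity
    refine (gauss_interval m σ hm hσ v hvσ _ _ _ hlo ?_).trans ?_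
    · intro y hy
      have : -w * s / (s + 1) = -(w * s / (s + 1)) := by ring
      rw [this]
      have := neg_abs_le y
      linarith [hy.2]
    · apply ENNReal.ofReal_le_ofReal
      apply le_of_eq
      have : w ≠ 0 := hw0.ne
      have : s ≠ 0 := by positivity
      field_simp
      ring
  · have : {y : ℝ | s * |D + y * C| < |y * C|} = ∅ := by
      ext y
      simp only [Set.mem_ofPred_eq, hset, hw0, sub_zero, Set.mem_empty_iff_false, iff_false, not_lt]
      nlinarith [abs_nonneg y]
    rw [this]; simp
  · have hsub : {y | s * |D + y * C| < |y * C|} ⊆ Set.Ioo (w * s / (s + 1)) (w * s / (s - 1)) := by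
      intro y hy
      have hy' := (hset y).1 hy
      have hypos : 0 < y := by
        by_contra hcon
        push Not at hcon
        rw [abs_of_nonpos (by linarith : y - w ≤ 0), abs_of_nonpos hcon] at hy'
        nlinarith
      rw [abs_of_pos hypos] at hy'
      have h1 := le_abs_self (y - w)
      have h2 := neg_abs_le (y - w)
      constructor
      · rw [div_lt_iff₀ hs2]; nlinarith
      · rw [lt_div_iff₀ hs1]; nlinarith
    refine (measure_mono hsub).trans ?_
    have hlo : 0 < w * s / (s + 1) := by positivity
    refine (gauss_interval m σ hm hσ v hvσ _ _ _ hlo ?_).trans ?_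
    · intro y hy
      exact hy.1.le.trans (le_abs_self y)
    · apply ENNReal.ofReal_le_ofReal
      apply le_of_eq
      have : w ≠ 0 := hw0.ne'
      have : s ≠ 0 := by positivity
      field_simp
      ring

theorem gauss_affine_null (m σ : ℝ) (hσ : 0 < σ) (v : NNReal) (hvσ : (v : ℝ) = σ ^ 2) (C D : ℝ) (h : ∃ y, D + y * C ≠ 0) :
    gaussianReal m v {y | D + y * C = 0} = 0 := by
  have hv : v ≠ 0 := by
    intro h
    rw [h] at hvσ
    have : 0 < σ ^ 2 := by positivity
    rw [← hvσ] at this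
    simp at this
  apply gaussianReal_absolutelyContinuous m hv
  apply Set.Subsingleton.measure_zero
  intro y hy z hz
  simp only [Set.mem_ofPred_eq] at hy hz
  by_contra hne
  obtain ⟨x, hx⟩ := h
  have hC : C = 0 := by
    have : (y - z) * C = 0 := by linarith
    rcases mul_eq_zero.1 this with h | h
    · exact absurd (sub_eq_zero.1 h) hne
    · exact h
  subst hC
  simp at hx hy
  exact hx hy

theorem le_cwDist_mul {ι : Type*} (x a : ι → ℝ) (h : cwDist x a ≠ ⊤) (i : ι) :
    |x i - a i| ≤ (cwDist x a).toReal * |a i| := by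
  have hi : (if a i ≠ 0 then ENNReal.ofReal (|x i - a i| / |a i|)
       else if x i = a i then 0 else ⊤) ≤ cwDist x a :=
    le_iSup (fun i => if a i ≠ 0 then ENNReal.ofReal (|x i - a i| / |a i|)
       else if x i = a i then 0 else ⊤) i
  by_cases h0 : a i = 0
  · by_cases h1 : x i = a i
    · rw [h1]; simp [h0]
    · simp only [h0, ne_eq, not_true_eq_false, if_false] at hi
      rw [h0] at h1
      simp only [h1, if_false, top_le_iff] at hi
      exact absurd hi h
  · simp only [ne_eq, h0, not_false_eq_true, if_true] at hi
    have := (ENNReal.ofReal_le_iff_le_toReal h).1 hi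
    rwa [div_le_iff₀ (abs_pos.mpr h0)] at this

/-- Upper bound for the condition number from a pointwise estimate. -/
theorem cwCond_le {ι : Type*} [Fintype ι] (D : Set (ι → ℝ)) (F : (ι → ℝ) → ℝ) (a : ι → ℝ)
    (G : (ι → ℝ) → ℝ) (hG : ContinuousAt G a) (hFa : F a ≠ 0)
    (hle : ∀ x ∈ D, ∀ d : ℝ, 0 ≤ d → (∀ i, |x i - a i| ≤ d * |a i|) →
      |F x - F a| / |F a| ≤ G x * d) :
    cwCond D (fun x (_ : Unit) => F x) a ≤ ENNReal.ofReal (G a) := by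
  have key : ∀ r : ℝ, G a < r → cwCond D (fun x (_ : Unit) => F x) a ≤ ENNReal.ofReal r := by
    intro r hr
    obtain ⟨ρ, hρ, hball⟩ := Metric.eventually_nhds_iff.1 (hG.eventually (gt_mem_nhds hr))
    set δ : ℝ := ρ / (2 * (‖a‖ + 1)) with hδ
    have hδpos : 0 < δ := by positivity
    refine (iInf₂_le (ENNReal.ofReal δ) (by simpa using hδpos)).trans ?_
    refine iSup₂_le fun x hx => ?_
    obtain ⟨hxD, hxd, hxa⟩ := hx
    have hfin : cwDist x a ≠ ⊤ := ne_top_of_le_ne_top ENNReal.ofReal_ne_top hxd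
    have hi := le_cwDist_mul x a hfin
    set d := (cwDist x a).toReal with hd
    have hd0 : 0 ≤ d := ENNReal.toReal_nonneg
    have hdδ : d ≤ δ := by
      rw [hd]; exact ENNReal.toReal_le_of_le_ofReal hδpos.le hxd
    have hdist : dist x a < ρ := by
      refine lt_of_le_of_lt ((dist_pi_le_iff (r := ρ / 2) (by positivity)).2 fun i => ?_)
        (half_lt_self hρ)
      rw [Real.dist_eq]
      calc |x i - a i| ≤ d * |a i| := hi i
        _ ≤ δ * (‖a‖ + 1) := by
            have h1 : |a i| ≤ ‖a‖ := norm_le_pi_norm a i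
            have h2 := abs_nonneg (a i)
            gcongr
            linarith
        _ = ρ / 2 := by rw [hδ]; field_simp
    have hGx := hball hdist
    have hb := hle x hxD d hd0 hi
    refine ENNReal.div_le_of_le_mul ?_
    have hcd : cwDist (fun (_ : Unit) => F x) (fun (_ : Unit) => F a)
        = ENNReal.ofReal (|F x - F a| / |F a|) := by
      simp [cwDist, hFa]
    rw [hcd, ← ENNReal.ofReal_toReal hfin, ← hd, ← ENNReal.ofReal_mul' hd0]
    apply ENNReal.ofReal_le_ofReal
    exact hb.trans (mul_le_mul_of_nonneg_right hGx.le hd0)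
  refine ge_of_tendsto (x := nhdsWithin (G a) (Set.Ioi (G a)))
    (f := fun r => ENNReal.ofReal r) ?_ ?_
  · exact (ENNReal.continuous_ofReal.tendsto _).mono_left nhdsWithin_le_nhds
  · filter_upwards [self_mem_nhdsWithin] with r hr using key r hr

theorem cLin_le {n : ℕ} (k : Fin n) (A : Matrix (Fin n) (Fin n) ℝ) (b : Fin n → ℝ)
    (hA : IsUnit A.det) (hx : (A⁻¹.mulVec b) k ≠ 0) :
    cLin k A b ≤ ENNReal.ofReal ((∑ i, |A⁻¹ k i * b i|
      + ∑ i, ∑ j, |A⁻¹ k i * A i j * (A⁻¹.mulVec b) j|) / |(A⁻¹.mulVec b) k|) := by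
  have hmat : funToMat' (pairToFun A b) = A := by ext i j; rfl
  have hvec : funToVec (pairToFun A b) = b := rfl
  have hX : ∀ j, ContinuousAt
      (fun x : (Fin n × Fin n) ⊕ Fin n → ℝ => ((funToMat' x)⁻¹.mulVec (funToVec x)) j)
      (pairToFun A b) := by
    intro j
    have hM : Continuous (funToMat' (n := n)) :=
      continuous_matrix fun i j => continuous_apply _
    have hV : Continuous (funToVec (n := n)) := continuous_pi fun i => continuous_apply _
    have heq : (fun x : (Fin n × Fin n) ⊕ Fin n → ℝ =>
        ((funToMat' x)⁻¹.mulVec (funToVec x)) j)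
        = fun x => ((funToMat' x).det)⁻¹ * ((funToMat' x).adjugate.mulVec (funToVec x)) j := by
      ext x
      rw [Matrix.inv_def, Ring.inverse_eq_inv', Matrix.smul_mulVec]
      rfl
    rw [heq]
    refine ContinuousAt.mul (ContinuousAt.inv₀ hM.matrix_det.continuousAt ?_) ?_
    · rw [hmat]; exact hA.ne_zero
    · exact ((continuous_apply j).comp
        (hM.matrix_adjugate.matrix_mulVec hV)).continuousAt
  have := cwCond_le {x | IsUnit (funToMat' x).det}
    (fun x => (Matrix.mulVec (funToMat' x)⁻¹ (funToVec x)) k) (pairToFun A b)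
    (fun x => (∑ i, |A⁻¹ k i * b i|
      + ∑ i, ∑ j, |A⁻¹ k i * A i j * ((funToMat' x)⁻¹.mulVec (funToVec x)) j|)
        / |(A⁻¹.mulVec b) k|) ?_ ?_ ?_
  · simpa only [cLin, hmat, hvec] using this
  · refine ContinuousAt.div_const (ContinuousAt.add continuousAt_const ?_) _
    refine tendsto_finsetSum _ fun i _ => tendsto_finsetSum _ fun j _ => ?_
    exact (continuousAt_const.mul (hX j)).abs
  · rwa [hmat, hvec]
  · intro x hxD d hd0 hi
    simp only [hmat, hvec]
    set A' := funToMat' x with hA'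
    set b' := funToVec x with hb'
    set x' := A'⁻¹.mulVec b' with hx'
    have hA'u : IsUnit A'.det := hxD
    have h1 : ∀ i j, |A' i j - A i j| ≤ d * |A i j| := fun i j => hi (Sum.inl (i, j))
    have h2 : ∀ i, |b' i - b i| ≤ d * |b i| := fun i => hi (Sum.inr i)
    have hdiff : x' k - (A⁻¹.mulVec b) k
        = ∑ i, A⁻¹ k i * ((b' i - b i) - ∑ j, (A' i j - A i j) * x' j) := by
      have e1 : A'.mulVec x' = b' := by
        rw [hx', Matrix.mulVec_mulVec, Matrix.mul_nonsing_inv _ hA'u, Matrix.one_mulVec]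
      have e2 : A⁻¹.mulVec (A.mulVec x') = x' := by
        rw [Matrix.mulVec_mulVec, Matrix.nonsing_inv_mul _ hA, Matrix.one_mulVec]
      have e3 : x' - A⁻¹.mulVec b
          = A⁻¹.mulVec ((b' - b) - (A' - A).mulVec x') := by
        rw [Matrix.sub_mulVec, e1, Matrix.mulVec_sub, Matrix.mulVec_sub, Matrix.mulVec_sub, e2]
        abel
      have := congrFun e3 k
      simpa [Matrix.mulVec, dotProduct] using this
    rw [div_mul_eq_mul_div]
    gcongr
    rw [hdiff, add_mul, Finset.sum_mul, Finset.sum_mul, ← Finset.sum_add_distrib]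
    refine (Finset.abs_sum_le_sum_abs _ _).trans (Finset.sum_le_sum fun i _ => ?_)
    rw [abs_mul, Finset.sum_mul]
    calc |A⁻¹ k i| * |b' i - b i - ∑ j, (A' i j - A i j) * x' j|
        ≤ |A⁻¹ k i| * (d * |b i| + ∑ j, d * |A i j| * |x' j|) := by
          gcongr
          refine (abs_sub _ _).trans (add_le_add (h2 i) ?_)
          refine (Finset.abs_sum_le_sum_abs _ _).trans (Finset.sum_le_sum fun j _ => ?_)
          rw [abs_mul]
          exact mul_le_mul_of_nonneg_right (h1 i j) (abs_nonneg _)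
      _ = _ := by
          rw [mul_add, Finset.mul_sum]
          congr 1
          · rw [abs_mul]; ring
          · refine Finset.sum_congr rfl fun j _ => ?_
            rw [abs_mul, abs_mul]; ring

theorem cond_sum_bound {n : ℕ} (S : Finset (Fin n × Fin n)) (k : Fin n)
    (A : Matrix (Fin n) (Fin n) ℝ) (b : Fin n → ℝ) (s : ℝ) (hs : 0 ≤ s)
    (hsupp : ∀ i j, (i, j) ∉ S → A i j = 0)
    (hA : A.det ≠ 0) (hB : (A.updateCol k b).det ≠ 0)
    (hden : ∀ i j, (i, j) ∈ S → |A i j * A.adjugate j i| ≤ s * |A.det|)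
    (hnum : ∀ i j, (i, j) ∈ S → j ≠ k →
      |A i j * (A.updateCol k b).adjugate j i| ≤ s * |(A.updateCol k b).det|) :
    cLin k A b ≤ ENNReal.ofReal ((4 * S.card - 2) * s) := by
  have hAu : IsUnit A.det := isUnit_iff_ne_zero.2 hA
  have hBu : IsUnit (A.updateCol k b).det := isUnit_iff_ne_zero.2 hB
  set x := A⁻¹.mulVec b with hxdef
  set B := A.updateCol k b with hBdef
  have hAx : A.mulVec x = b := by
    rw [hxdef, Matrix.mulVec_mulVec, Matrix.mul_nonsing_inv _ hAu, Matrix.one_mulVec]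
  have hinv : ∀ (M : Matrix (Fin n) (Fin n) ℝ) i j, M⁻¹ i j = M.det⁻¹ * M.adjugate i j := by
    intro M i j
    rw [Matrix.inv_def, Ring.inverse_eq_inv']; rfl
  have hxk : x k = A.det⁻¹ * B.det := by
    rw [hxdef, Matrix.inv_def, Ring.inverse_eq_inv', Matrix.smul_mulVec,
      ← Matrix.cramer_eq_adjugate_mulVec]
    rfl
  have hxk0 : x k ≠ 0 := by rw [hxk]; exact mul_ne_zero (inv_ne_zero hA) hB
  have hden' : ∀ i j, (i, j) ∈ S → |A i j * A⁻¹ j i| ≤ s := by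
    intro i j hij
    have : A i j * A⁻¹ j i = A i j * A.adjugate j i / A.det := by rw [hinv]; ring
    rw [this, abs_div, div_le_iff₀ (abs_pos.2 hA)]
    exact hden i j hij
  have hnum' : ∀ i j, (i, j) ∈ S → j ≠ k → |A i j * B⁻¹ j i| ≤ s := by
    intro i j hij hjk
    have : A i j * B⁻¹ j i = A i j * B.adjugate j i / B.det := by rw [hinv]; ring
    rw [this, abs_div, div_le_iff₀ (abs_pos.2 hB)]
    exact hnum i j hij hjk
  have hrow : ∀ i j, ∑ l, A⁻¹ i l * A l j = (1 : Matrix (Fin n) (Fin n) ℝ) i j := by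
    intro i j
    rw [← Matrix.mul_apply, Matrix.nonsing_inv_mul _ hAu]
  have hBinv : ∀ i j, j ≠ k → B⁻¹ j i = A⁻¹ j i - x j / x k * A⁻¹ k i := by
    intro i j hjk
    have hr : Matrix.vecMul (fun i => A⁻¹ j i - x j / x k * A⁻¹ k i) B = Pi.single j 1 := by
      ext l
      simp only [Matrix.vecMul, dotProduct]
      by_cases hl : l = k
      · subst hl
        have : ∀ i, (A⁻¹ j i - x j / x l * A⁻¹ l i) * B i l
            = A⁻¹ j i * b i - x j / x l * (A⁻¹ l i * b i) := by
          intro i; simp [hBdef]; ring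
        simp only [this, Finset.sum_sub_distrib, ← Finset.mul_sum]
        have e : ∀ m, ∑ i, A⁻¹ m i * b i = x m := fun m => rfl
        rw [e, e, div_mul_cancel₀ _ hxk0, sub_self, Pi.single_eq_of_ne hjk.symm]
      · have : ∀ i, (A⁻¹ j i - x j / x k * A⁻¹ k i) * B i l
            = A⁻¹ j i * A i l - x j / x k * (A⁻¹ k i * A i l) := by
          intro i; simp [hBdef, hl]; ring
        simp only [this, Finset.sum_sub_distrib, ← Finset.mul_sum, hrow]
        rw [Matrix.one_apply_ne (Ne.symm hl), mul_zero, sub_zero, Matrix.one_apply,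
          Pi.single_apply]
        simp [eq_comm]
    have h2 := congrArg (fun v => Matrix.vecMul v B⁻¹) hr
    simp only [Matrix.vecMul_vecMul, Matrix.mul_nonsing_inv _ hBu, Matrix.vecMul_one] at h2
    have h3 := congrFun h2 i
    simp at h3
    exact h3.symm
  -- pointwise bound
  have hpt : ∀ p : Fin n × Fin n, p ∈ S → |A⁻¹ k p.1 * A p.1 p.2 * x p.2|
      ≤ (if p.2 = k then s else 2 * s) * |x k| := by
    rintro ⟨i, j⟩ hij
    simp only
    split_ifs with hj
    · subst hj
      rw [abs_mul, mul_comm (A⁻¹ j i)]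
      exact mul_le_mul_of_nonneg_right (hden' i j hij) (abs_nonneg _)
    · have e : A⁻¹ k i * A i j * x j = (A i j * A⁻¹ j i - A i j * B⁻¹ j i) * x k := by
        rw [hBinv i j hj]; field_simp; ring
      rw [e, abs_mul]
      refine mul_le_mul_of_nonneg_right ?_ (abs_nonneg _)
      refine (abs_sub _ _).trans ?_
      linarith [hden' i j hij, hnum' i j hij hj]
  obtain ⟨i0, hi0⟩ : ∃ i0, (i0, k) ∈ S := by
    by_contra hcon
    push Not at hcon
    have := hrow k k
    rw [Finset.sum_eq_zero, Matrix.one_apply_eq] at this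
    · exact zero_ne_one this
    · intro l _
      rw [hsupp l k (hcon l), mul_zero]
  have hsum : ∑ i, ∑ j, |A⁻¹ k i * A i j * x j| ≤ (2 * S.card - 1) * s * |x k| := by
    calc ∑ i, ∑ j, |A⁻¹ k i * A i j * x j|
        = ∑ p : Fin n × Fin n, |A⁻¹ k p.1 * A p.1 p.2 * x p.2| := by
          rw [Fintype.sum_prod_type]
      _ = ∑ p ∈ S, |A⁻¹ k p.1 * A p.1 p.2 * x p.2| := by
          symm
          apply Finset.sum_subset (Finset.subset_univ _)
          rintro ⟨i, j⟩ _ hij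
          simp [hsupp i j hij]
      _ = |A⁻¹ k i0 * A i0 k * x k|
          + ∑ p ∈ S.erase (i0, k), |A⁻¹ k p.1 * A p.1 p.2 * x p.2| := by
          rw [← Finset.add_sum_erase S _ hi0]
      _ ≤ s * |x k| + ∑ p ∈ S.erase (i0, k), 2 * s * |x k| := by
          refine add_le_add (by simpa using hpt (i0, k) hi0) (Finset.sum_le_sum fun p hp => ?_)
          refine (hpt p (Finset.mem_of_mem_erase hp)).trans ?_
          gcongr
          split_ifs <;> linarith
      _ = _ := by
          rw [Finset.sum_const, Finset.card_erase_of_mem hi0, nsmul_eq_mul,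
            Nat.cast_sub (Finset.card_pos.2 ⟨_, hi0⟩)]
          push_cast
          ring
  refine (cLin_le k A b hAu hxk0).trans (ENNReal.ofReal_le_ofReal ?_)
  rw [← hxdef, div_le_iff₀ (abs_pos.2 hxk0)]
  have hbsum : ∑ i, |A⁻¹ k i * b i| ≤ ∑ i, ∑ j, |A⁻¹ k i * A i j * x j| := by
    refine Finset.sum_le_sum fun i _ => ?_
    have : A⁻¹ k i * b i = ∑ j, A⁻¹ k i * A i j * x j := by
      rw [← congrFun hAx i]
      simp only [Matrix.mulVec, dotProduct, Finset.mul_sum, mul_assoc]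
    rw [this]
    exact Finset.abs_sum_le_sum_abs _ _
  linarith

theorem pi_ratio {ι : Type*} [Fintype ι] [DecidableEq ι] {n : ℕ} (m : ι → ℝ)
    (hm : ∀ q, |m q| ≤ 1) (σ : ℝ) (hσ : 0 < σ) (v : NNReal) (hvσ : (v : ℝ) = σ ^ 2)
    (M : (ι → ℝ) → Matrix (Fin n) (Fin n) ℝ) (hM : ∀ i j, Measurable fun g => M g i j)
    (p : ι) (i j : Fin n)
    (hupd : ∀ g y, M (Function.update g p y)
      = (M g).updateRow i (Function.update (M g i) j y)) (s : ℝ) (hs : 1 < s) :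
    Measure.pi (fun q => gaussianReal (m q) v)
        {g | s * |(M g).det| < |M g i j * (M g).adjugate j i|}
      ≤ ENNReal.ofReal ((1 + σ) / σ * Real.sqrt (2 / Real.pi) / (s - 1)) := by
  refine pi_le_of_slice _ _ ?_ p _ fun g => ?_
  · exact measurableSet_lt ((measurable_det_of M hM).abs.const_mul s)
      ((hM i j).mul (measurable_adj_of M hM j i)).abs
  · refine le_trans (le_of_eq ?_) (gauss_ratio (m p) σ (hm p) hσ v hvσ s ((M g).adjugate j i)
      ((M g).det - M g i j * (M g).adjugate j i) hs)
    congr 1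
    ext y
    simp only [Set.mem_ofPred_eq, hupd, det_set_entry, adj_set_entry, Matrix.updateRow_self,
      Function.update_self]
    have : (M g).det - M g i j * (M g).adjugate j i + y * (M g).adjugate j i
      = (M g).det + (y - M g i j) * (M g).adjugate j i := by ring
    rw [this]

/-- Sparse matrix with random entries on `T` and entries of `B` on `S \ T`. -/
noncomputable def mixMat {n : ℕ} (S : Finset (Fin n × Fin n)) (B : Matrix (Fin n) (Fin n) ℝ)
    (T : Finset S) (g : S → ℝ) : Matrix (Fin n) (Fin n) ℝ :=
  Matrix.of fun i j => if h : (i, j) ∈ S then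
    (if (⟨(i, j), h⟩ : S) ∈ T then g ⟨(i, j), h⟩ else B i j) else 0

theorem mixMat_measurable {n : ℕ} (S : Finset (Fin n × Fin n)) (B : Matrix (Fin n) (Fin n) ℝ)
    (T : Finset S) (i j : Fin n) : Measurable fun g => mixMat S B T g i j := by
  unfold mixMat
  simp only [Matrix.of_apply]
  split_ifs
  · exact measurable_pi_apply _
  · exact measurable_const
  · exact measurable_const

theorem mixMat_insert_update {n : ℕ} (S : Finset (Fin n × Fin n))
    (B : Matrix (Fin n) (Fin n) ℝ) (T : Finset S) (p : S) (g : S → ℝ) (y : ℝ) :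
    mixMat S B (insert p T) (Function.update g p y)
      = (mixMat S B T g).updateRow p.1.1
          (Function.update (mixMat S B T g p.1.1) p.1.2 y) := by
  obtain ⟨⟨i, j⟩, hp⟩ := p
  ext a c
  by_cases ha : a = i
  · subst ha
    by_cases hc : c = j
    · subst hc
      simp [mixMat, hp]
    · simp [mixMat, hc]
  · simp [mixMat, Matrix.updateRow_apply, ha]

theorem mixMat_update {n : ℕ} (S : Finset (Fin n × Fin n))
    (B : Matrix (Fin n) (Fin n) ℝ) (T : Finset S) (p : S) (hpT : p ∉ T) (g : S → ℝ) (y : ℝ) :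
    mixMat S B T (Function.update g p y) = mixMat S B T g := by
  ext a c
  simp only [mixMat, Matrix.of_apply]
  split_ifs with h1 h2
  · rw [Function.update_of_ne]
    rintro rfl
    exact hpT h2
  · rfl
  · rfl

theorem mixMat_null {n : ℕ} (S : Finset (Fin n × Fin n)) (B : Matrix (Fin n) (Fin n) ℝ)
    (hB : ∀ i j, (i, j) ∉ S → B i j = 0) (hdet : B.det ≠ 0) (m : S → ℝ)
    (σ : ℝ) (hσ : 0 < σ) (v : NNReal) (hvσ : (v : ℝ) = σ ^ 2) (T : Finset S) :
    Measure.pi (fun q => gaussianReal (m q) v) {g | (mixMat S B T g).det = 0} = 0 := by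
  induction T using Finset.induction_on with
  | empty =>
    have : ∀ g, mixMat S B ∅ g = B := by
      intro g
      ext i j
      by_cases h : (i, j) ∈ S
      · simp [mixMat, h]
      · simp [mixMat, h, hB]
    simp [this, hdet]
  | insert p T hpT ih =>
    have hsub : {g | (mixMat S B (insert p T) g).det = 0} ⊆ {g | (mixMat S B T g).det = 0} ∪
        {g | (mixMat S B T g).det ≠ 0 ∧ (mixMat S B (insert p T) g).det = 0} := by
      intro g hg
      by_cases h : (mixMat S B T g).det = 0
      · exact Or.inl h
      · exact Or.inr ⟨h, hg⟩
    refine measure_mono_null hsub (measure_union_null ih ?_)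
    refine le_antisymm ?_ zero_le
    have m1 := measurable_det_of _ (mixMat_measurable S B T)
    have m2 := measurable_det_of _ (mixMat_measurable S B (insert p T))
    refine pi_le_of_slice _ _ ?_ p _ fun g => ?_
    · exact (m1 (measurableSet_singleton 0)).compl.inter (m2 (measurableSet_singleton 0))
    · by_cases h0 : (mixMat S B T g).det = 0
      · simp [mixMat_update S B T p hpT, h0]
      · set N := mixMat S B T g with hN
        have := gauss_affine_null (m p) σ hσ v hvσ (N.adjugate p.1.2 p.1.1)
          (N.det - N p.1.1 p.1.2 * N.adjugate p.1.2 p.1.1) ⟨N p.1.1 p.1.2, by simpa using h0⟩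
        refine le_trans (measure_mono ?_) this.le
        intro y hy
        have hy2 := hy.2
        rw [mixMat_insert_update, det_set_entry] at hy2
        simp only [Set.mem_ofPred_eq]
        rw [← hy2]
        ring

theorem vec_null {n : ℕ} (A : Matrix (Fin n) (Fin n) ℝ) (hA : A.det ≠ 0) (k : Fin n)
    (m : Fin n → ℝ) (σ : ℝ) (hσ : 0 < σ) (v : NNReal) (hvσ : (v : ℝ) = σ ^ 2) :
    Measure.pi (fun q => gaussianReal (m q) v) {b | (A.updateCol k b).det = 0} = 0 := by
  obtain ⟨i, hi⟩ : ∃ i, A.adjugate k i ≠ 0 := by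
    by_contra hcon
    push Not at hcon
    have h := congrFun (congrFun (Matrix.adjugate_mul A) k) k
    rw [Matrix.mul_apply] at h
    simp [hcon] at h
    exact hA h.symm
  have hlin : ∀ b : Fin n → ℝ, (A.updateCol k b).det = ∑ l, A.adjugate k l * b l := by
    intro b
    rw [← Matrix.cramer_apply, Matrix.cramer_eq_adjugate_mulVec]
    rfl
  refine le_antisymm ?_ zero_le
  refine pi_le_of_slice _ _ ?_ i _ fun b => ?_
  · simp only [hlin]
    refine measurableSet_eq_fun (Finset.measurable_sum _ fun l _ => ?_) measurable_const
    exact (measurable_pi_apply l).const_mul _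
  · have := gauss_affine_null (m i) σ hσ v hvσ (A.adjugate k i)
      (∑ l ∈ Finset.univ.erase i, A.adjugate k l * b l)
      ⟨(1 - ∑ l ∈ Finset.univ.erase i, A.adjugate k l * b l) / A.adjugate k i, by
        rw [div_mul_cancel₀ _ hi]; simp⟩
    refine le_trans (measure_mono ?_) this.le
    intro y hy
    simp only [Set.mem_ofPred_eq, hlin] at hy ⊢
    rw [← Finset.add_sum_erase _ _ (Finset.mem_univ i), Function.update_self] at hy
    rw [← hy, add_comm, mul_comm]
    congr 1
    refine Finset.sum_congr rfl fun l hl => ?_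
    rw [Function.update_of_ne (Finset.ne_of_mem_erase hl)]

theorem prod_le_of_slice {n : ℕ} {α : Type*} [MeasurableSpace α] (μ : Measure α)
    [IsProbabilityMeasure μ] (ν : Measure (Fin n → ℝ)) [IsProbabilityMeasure ν]
    (f : α → Matrix (Fin n) (Fin n) ℝ) (hf : Measurable f)
    (E : Set (Matrix (Fin n) (Fin n) ℝ × (Fin n → ℝ))) (hE : MeasurableSet E) (c : ℝ≥0∞)
    (h : ∀ b, μ {g | (f g, b) ∈ E} ≤ c) : (μ.map f).prod ν E ≤ c := by
  have : IsProbabilityMeasure (μ.map f) := Measure.isProbabilityMeasure_map hf.aemeasurable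
  rw [Measure.prod_apply_symm hE]
  calc ∫⁻ b, (μ.map f) ((fun x => (x, b)) ⁻¹' E) ∂ν ≤ ∫⁻ _, c ∂ν := by
        refine lintegral_mono fun b => ?_
        rw [Measure.map_apply hf (measurable_prodMk_right hE)]
        exact h b
    _ = c := by simp

theorem measurable_entry {n : ℕ} (i j : Fin n) :
    Measurable fun A : Matrix (Fin n) (Fin n) ℝ => A i j :=
  (measurable_pi_apply j).comp
    (measurable_pi_apply (X := fun _ : Fin n => Fin n → ℝ) i)

theorem count_sum {n : ℕ} (S : Finset (Fin n × Fin n)) (hn : 0 < n) :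
    S.card + ∑ k : Fin n, (S.filter fun p => p.2 ≠ k).card = n * S.card := by
  have h : ∑ k : Fin n, (S.filter fun p => p.2 ≠ k).card = ∑ p ∈ S, (n - 1) := by
    simp only [Finset.card_filter]
    rw [Finset.sum_comm]
    refine Finset.sum_congr rfl fun p _ => ?_
    rw [← Finset.card_filter]
    have : (Finset.univ.filter fun k : Fin n => p.2 ≠ k) = Finset.univ.erase p.2 := by
      ext k; simp [eq_comm]
    rw [this, Finset.card_erase_of_mem (Finset.mem_univ _)]
    simp
  rw [h, Finset.sum_const, smul_eq_mul]
  obtain ⟨m, rfl⟩ : ∃ m, n = m + 1 := ⟨n - 1, by omega⟩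
  simp
  ring

/-- Let `S ⊆ [n]²` be admissible, `Ā ∈ M_S`, `b̄ ∈ ℝⁿ` with
`‖Ā‖_max ≤ 1`, `‖b̄‖_∞ ≤ 1`, `σ > 0`, `A ~ N_S(Ā, σ²Id)` and `b ~ N(b̄, σ²Id)`
independent. For every real `t > 2|S|`,
`Prob{c(A,b) > t} ≤ ((1+σ)/σ)·(4n|S|²/(t−2|S|))·√(2/π)`,
where `c(A,b) = max_k c_k(A,b)`. -/
theorem prob_cLinMax_gt {n : ℕ} (S : Finset (Fin n × Fin n)) (hS : Admissible S)
    (Abar : Matrix (Fin n) (Fin n) ℝ) (hsupp : ∀ i j, (i, j) ∉ S → Abar i j = 0)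
    (hmax : ∀ i j, |Abar i j| ≤ 1) (bbar : Fin n → ℝ) (hbmax : ∀ i, |bbar i| ≤ 1)
    (σ : ℝ) (hσ : 0 < σ) (t : ℝ) (ht : 2 * (S.card : ℝ) < t) :
    (sparseGaussian S Abar σ).prod (vecGaussian bbar σ)
        {p | ENNReal.ofReal t < cLinMax p.1 p.2}
      ≤ ENNReal.ofReal ((1 + σ) / σ
          * (4 * (n : ℝ) * (S.card : ℝ) ^ 2 / (t - 2 * S.card))
          * Real.sqrt (2 / Real.pi)) := by
  rcases Nat.eq_zero_or_pos n with hn0 | hn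
  · subst hn0
    have : {p : Matrix (Fin 0) (Fin 0) ℝ × (Fin 0 → ℝ) |
        ENNReal.ofReal t < cLinMax p.1 p.2} = ∅ := by
      ext p
      simp [cLinMax]
    rw [this]; simp
  obtain ⟨B, hBsupp, hBdet⟩ := hS
  set v : NNReal := ⟨σ ^ 2, sq_nonneg σ⟩ with hv
  have hvσ : (v : ℝ) = σ ^ 2 := rfl
  set μ : Measure (S → ℝ) := Measure.pi fun p : S => gaussianReal (Abar p.1.1 p.1.2) v with hμ
  set f : (S → ℝ) → Matrix (Fin n) (Fin n) ℝ :=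
    fun g => Matrix.of fun i j => if h : (i, j) ∈ S then g ⟨(i, j), h⟩ else 0 with hf
  have hfm : f = mixMat S B Finset.univ := by
    funext g
    ext i j
    simp [hf, mixMat]
  have hentry : ∀ i j, Measurable fun g => f g i j := by
    intro i j
    rw [hfm]; exact mixMat_measurable S B _ i j
  have hfmeas : Measurable f :=
    measurable_pi_lambda _ fun i => measurable_pi_lambda _ fun j => hentry i j
  set ν : Measure (Fin n → ℝ) := vecGaussian bbar σ with hν
  have hνp : IsProbabilityMeasure ν := by
    have : IsProbabilityMeasure (Measure.pi fun i => gaussianReal (bbar i) v) := inferInstance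
    exact this
  have hsp : sparseGaussian S Abar σ = μ.map f := rfl
  rw [hsp]
  have hmapp : IsProbabilityMeasure (μ.map f) :=
    Measure.isProbabilityMeasure_map hfmeas.aemeasurable
  have hfupd : ∀ (p : S) g y, f (Function.update g p y)
      = (f g).updateRow p.1.1 (Function.update (f g p.1.1) p.1.2 y) := by
    intro p g y
    have := mixMat_insert_update S B Finset.univ p g y
    rw [Finset.insert_eq_of_mem (Finset.mem_univ _)] at this
    rw [hfm]; exact this
  have hM1 : 1 ≤ S.card := by
    by_contra hcon
    have hS0 : S = ∅ := Finset.card_eq_zero.1 (by omega)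
    have hB0 : B = 0 := by
      ext i j; exact hBsupp i j (by simp [hS0])
    have : Nonempty (Fin n) := ⟨⟨0, hn⟩⟩
    rw [hB0, Matrix.det_zero] at hBdet
    exact not_isUnit_zero hBdet
  have hMn : S.card ≤ n * n := by
    have := Finset.card_le_univ S
    simpa using this
  set K : ℝ := (1 + σ) / σ * Real.sqrt (2 / Real.pi) with hK
  have hKpos : 0 < K := by positivity
  have hKlow : 3 / 4 ≤ K := by
    have h1 : 1 ≤ (1 + σ) / σ := by rw [le_div_iff₀ hσ]; linarith
    have h2 : 3 / 4 ≤ Real.sqrt (2 / Real.pi) := by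
      apply Real.le_sqrt_of_sq_le
      rw [le_div_iff₀ Real.pi_pos]
      have := Real.pi_lt_d2
      norm_num at this ⊢
      linarith
    rw [hK]
    nlinarith
  have hrhs : (1 + σ) / σ * (4 * (n : ℝ) * (S.card : ℝ) ^ 2 / (t - 2 * S.card))
      * Real.sqrt (2 / Real.pi) = K * (4 * (n : ℝ) * (S.card : ℝ) ^ 2) / (t - 2 * S.card) := by
    rw [hK]; ring
  rw [hrhs]
  set m : ℝ := (S.card : ℝ) with hm
  have hm1 : 1 ≤ m := by rw [hm]; exact_mod_cast hM1
  have hn1 : (1 : ℝ) ≤ n := by exact_mod_cast hn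
  have htm : 0 < t - 2 * m := by linarith
  by_cases htriv : t - 2 * m ≤ K * (4 * (n : ℝ) * m ^ 2)
  · refine prob_le_one.trans ?_
    rw [ENNReal.one_le_ofReal, le_div_iff₀ htm, one_mul]
    exact htriv
  push Not at htriv
  have htbig : 3 * (n : ℝ) * m ^ 2 < t - 2 * m := by
    refine lt_of_le_of_lt ?_ htriv
    have : 0 ≤ (n : ℝ) * m ^ 2 := by positivity
    nlinarith
  have ht4 : 4 * m ^ 2 - 2 * m ≤ t ∧ 4 * m - 2 < t := by
    rcases Nat.lt_or_ge n 2 with h2 | h2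
    · have hn1' : n = 1 := by omega
      have hSm : S.card = 1 := by
        have : n * n = 1 := by rw [hn1']
        omega
      have : m = 1 := by rw [hm, hSm]; simp
      rw [this, hn1'] at htbig
      rw [this]
      norm_num at htbig ⊢
      constructor <;> linarith
    · have h2' : (2 : ℝ) ≤ n := by exact_mod_cast h2
      have h6 : 6 * m ^ 2 ≤ 3 * (n : ℝ) * m ^ 2 := by
        have : 0 ≤ m ^ 2 := sq_nonneg m
        nlinarith
      constructor <;> nlinarith
  obtain ⟨ht4a, ht4b⟩ := ht4
  have hq : 0 < 4 * m - 2 := by linarith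
  set s : ℝ := t / (4 * m - 2) with hs
  have hs1 : 1 < s := by rw [hs, lt_div_iff₀ hq]; linarith
  have hst : (4 * m - 2) * s = t := by rw [hs]; field_simp
  set c : ℝ≥0∞ := ENNReal.ofReal (K / (s - 1)) with hc
  let N1 : Set (Matrix (Fin n) (Fin n) ℝ × (Fin n → ℝ)) := {q | ∃ p ∉ S, q.1 p.1 p.2 ≠ 0}
  let N2 : Set (Matrix (Fin n) (Fin n) ℝ × (Fin n → ℝ)) := {q | q.1.det = 0}
  let N3 : Fin n → Set (Matrix (Fin n) (Fin n) ℝ × (Fin n → ℝ)) := fun k =>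
    {q | q.1.det ≠ 0 ∧ (q.1.updateCol k q.2).det = 0}
  let E : Fin n × Fin n → Set (Matrix (Fin n) (Fin n) ℝ × (Fin n → ℝ)) := fun p =>
    {q | s * |q.1.det| < |q.1 p.1 p.2 * q.1.adjugate p.2 p.1|}
  let E' : Fin n → Fin n × Fin n → Set (Matrix (Fin n) (Fin n) ℝ × (Fin n → ℝ)) := fun k p =>
    {q | s * |(q.1.updateCol k q.2).det|
      < |q.1.updateCol k q.2 p.1 p.2 * (q.1.updateCol k q.2).adjugate p.2 p.1|}
  have hsub : {p : Matrix (Fin n) (Fin n) ℝ × (Fin n → ℝ) | ENNReal.ofReal t < cLinMax p.1 p.2}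
      ⊆ N1 ∪ (N2 ∪ ((⋃ k, N3 k) ∪ ((⋃ p ∈ S, E p) ∪
        ⋃ k ∈ (Finset.univ : Finset (Fin n)), ⋃ p ∈ S.filter (fun p => p.2 ≠ k), E' k p))) := by
    rintro ⟨A, b⟩ hq
    by_contra hcon
    simp only [Set.mem_union, not_or, Set.mem_iUnion, not_exists] at hcon
    obtain ⟨h1, h2, h3, h4, h5⟩ := hcon
    have hdetA : A.det ≠ 0 := h2
    have hq' : ENNReal.ofReal t < cLinMax A b := hq
    refine absurd hq' (not_lt.2 (iSup_le fun k => ?_))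
    rw [← hst]
    refine cond_sum_bound S k A b s (by linarith) ?_ hdetA ?_ ?_ ?_
    · intro i j hij
      by_contra h
      exact h1 ⟨(i, j), hij, h⟩
    · intro h
      exact h3 k ⟨hdetA, h⟩
    · intro i j hij
      exact not_lt.1 (h4 (i, j) hij)
    · intro i j hij hjk
      have h6 : ¬ (s * |(A.updateCol k b).det|
          < |A.updateCol k b i j * (A.updateCol k b).adjugate j i|) :=
        h5 k (Finset.mem_univ k) (i, j) (Finset.mem_filter.2 ⟨hij, hjk⟩)
      have h7 := not_lt.1 h6
      rwa [Matrix.updateCol_ne hjk] at h7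
  have me1 : ∀ i j, Measurable fun q : Matrix (Fin n) (Fin n) ℝ × (Fin n → ℝ) => q.1 i j :=
    fun i j => (measurable_entry i j).comp measurable_fst
  have me2 : ∀ k i j, Measurable fun q : Matrix (Fin n) (Fin n) ℝ × (Fin n → ℝ) =>
      q.1.updateCol k q.2 i j := by
    intro k i j
    by_cases h : j = k
    · subst h
      simp only [Matrix.updateCol_self]
      exact (measurable_pi_apply i).comp measurable_snd
    · simp only [Matrix.updateCol_apply, h, if_false]
      exact me1 i j
  have md1 := measurable_det_of _ me1
  have md2 := fun k => measurable_det_of _ (me2 k)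
  have hN1 : (μ.map f).prod ν N1 = 0 := by
    refine le_antisymm (prod_le_of_slice μ ν f hfmeas N1 ?_ 0 fun b => ?_) zero_le
    · have : N1 = ⋃ p ∈ (Sᶜ : Finset _), {q | q.1 p.1 p.2 ≠ 0} := by
        ext q; simp [N1]
      rw [this]
      exact Finset.measurableSet_biUnion _ fun p _ =>
        ((me1 p.1 p.2) (measurableSet_singleton 0)).compl
    · have : {g | (f g, b) ∈ N1} = ∅ := by
        ext g
        simp only [N1, Set.mem_ofPred_eq, Set.mem_empty_iff_false, iff_false]
        rintro ⟨p, hp, h⟩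
        exact h (by simp [hf, hp])
      rw [this]; simp
  have hN2 : (μ.map f).prod ν N2 = 0 := by
    refine le_antisymm (prod_le_of_slice μ ν f hfmeas N2
      (md1 (measurableSet_singleton 0)) 0 fun b => ?_) zero_le
    have := mixMat_null S B hBsupp hBdet.ne_zero (fun p : S => Abar p.1.1 p.1.2) σ hσ v hvσ
      Finset.univ
    rw [← hfm] at this
    exact this.le
  have hN3 : ∀ k, (μ.map f).prod ν (N3 k) = 0 := by
    intro k
    have hmeas : MeasurableSet (N3 k) :=
      (md1 (measurableSet_singleton 0)).compl.inter (md2 k (measurableSet_singleton 0))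
    rw [Measure.measure_prod_null hmeas]
    refine Filter.Eventually.of_forall fun A => ?_
    by_cases hA : A.det = 0
    · have : Prod.mk A ⁻¹' N3 k = ∅ := by
        ext b; simp [N3, hA]
      simp [this]
    · refine measure_mono_null ?_ (vec_null A hA k bbar σ hσ v hvσ)
      intro b hb
      exact hb.2
  have hE : ∀ p ∈ S, (μ.map f).prod ν (E p) ≤ c := by
    intro p hp
    refine prod_le_of_slice μ ν f hfmeas _ ?_ c fun b => ?_
    · exact measurableSet_lt (md1.abs.const_mul s)
        ((me1 _ _).mul (measurable_adj_of _ me1 _ _)).abs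
    · exact pi_ratio (fun p : S => Abar p.1.1 p.1.2) (fun q => hmax _ _) σ hσ v hvσ f hentry
        ⟨p, hp⟩ p.1 p.2 (hfupd ⟨p, hp⟩) s hs1
  have hE' : ∀ k, ∀ p ∈ S.filter (fun p => p.2 ≠ k), (μ.map f).prod ν (E' k p) ≤ c := by
    intro k p hp
    obtain ⟨hpS, hpk⟩ := Finset.mem_filter.1 hp
    refine prod_le_of_slice μ ν f hfmeas _ ?_ c fun b => ?_
    · exact measurableSet_lt ((md2 k).abs.const_mul s)
        ((me2 k _ _).mul (measurable_adj_of _ (me2 k) _ _)).abs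
    · refine pi_ratio (fun p : S => Abar p.1.1 p.1.2) (fun q => hmax _ _) σ hσ v hvσ
        (fun g => (f g).updateCol k b) ?_ ⟨p, hpS⟩ p.1 p.2 ?_ s hs1
      · intro i j
        by_cases h : j = k
        · subst h
          simp
        · simp only [Matrix.updateCol_apply, h, if_false]
          exact hentry i j
      · intro g y
        rw [hfupd ⟨p, hpS⟩]
        ext a d
        by_cases ha : a = p.1
        · by_cases hd : d = k
          · have hd' : d ≠ p.2 := by rw [hd]; exact hpk.symm
            simp [Matrix.updateRow_apply, Matrix.updateCol_apply, ha, hd, hd', hpk.symm]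
          · by_cases hdp : d = p.2
            · simp [Matrix.updateRow_apply, Matrix.updateCol_apply, ha, hdp, hpk]
            · simp [Matrix.updateRow_apply, Matrix.updateCol_apply, ha, hd, hdp]
        · by_cases hd : d = k
          · simp [Matrix.updateRow_apply, Matrix.updateCol_apply, ha, hd]
          · simp [Matrix.updateRow_apply, Matrix.updateCol_apply, ha, hd]
  have hU : (μ.map f).prod ν {p | ENNReal.ofReal t < cLinMax p.1 p.2}
      ≤ ((n * S.card : ℕ) : ℝ≥0∞) * c := by
    refine (measure_mono hsub).trans ?_
    refine (measure_union_le _ _).trans ?_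
    rw [hN1, zero_add]
    refine (measure_union_le _ _).trans ?_
    rw [hN2, zero_add]
    refine (measure_union_le _ _).trans ?_
    rw [measure_iUnion_null hN3, zero_add]
    refine (measure_union_le _ _).trans ?_
    rw [← count_sum S hn]
    push_cast
    rw [add_mul, Finset.sum_mul]
    refine add_le_add ?_ ?_
    · refine (measure_biUnion_finset_le _ _).trans ?_
      refine (Finset.sum_le_sum hE).trans ?_
      simp
    · refine (measure_biUnion_finset_le _ _).trans (Finset.sum_le_sum fun k _ => ?_)
      refine (measure_biUnion_finset_le _ _).trans ?_
      refine (Finset.sum_le_sum (hE' k)).trans ?_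
      rw [Finset.sum_const, nsmul_eq_mul]
  refine hU.trans ?_
  rw [hc, ← ENNReal.ofReal_natCast, ← ENNReal.ofReal_mul (by positivity)]
  apply ENNReal.ofReal_le_ofReal
  push_cast
  rw [← hm]
  have hs1' : s - 1 = (t - (4 * m - 2)) / (4 * m - 2) := by rw [hs]; field_simp
  have hd : 0 < t - (4 * m - 2) := by linarith
  rw [hs1', div_div_eq_mul_div, ← mul_div_assoc, div_le_div_iff₀ hd htm]
  have hfin : (4 * m - 2) * (t - 2 * m) ≤ 4 * m * (t - (4 * m - 2)) := by nlinarith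
  have hnmK : 0 ≤ (n : ℝ) * m * K := by positivity
  calc (n : ℝ) * m * (K * (4 * m - 2)) * (t - 2 * m)
      = (n : ℝ) * m * K * ((4 * m - 2) * (t - 2 * m)) := by ring
    _ ≤ (n : ℝ) * m * K * (4 * m * (t - (4 * m - 2))) := mul_le_mul_of_nonneg_left hfin hnmK
    _ = _ := by ring
end

section
/- Let T denote the set of n×n lower triangular real matrices. Let L̄ ∈ T and b̄ ∈ ℝⁿ with ‖L̄‖_max ≤ 1 and ‖b̄‖_∞ ≤ 1, σ > 0, and let L ~ N_T(L̄, σ²Id) and b ~ N(b̄, σ²Id) be independent (only the entries l_{ij} with i ≥ j are random Gaussians N(l̄_{ij}, σ²); entries above the diagonal are zero). Then for every real t > n(n+1), Prob{ c(L,b) > t } ≤ ((1 + σ)/σ)·(n³(n+1)²/(t − n(n+1)))·√(2/π), where c(L,b) = max_{k ∈ [n]} c_k(L,b) and c_k(L,b) is the componentwise condition number of the map (L,b) ↦ (L⁻¹b)_k at (L,b) (L is almost surely invertible). -/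
open MeasureTheory ProbabilityTheory
open scoped ENNReal

/-- The lower-triangular sparsity pattern `{(i,j) ∈ [n]² : i ≥ j}`. -/
def triPattern (n : ℕ) : Finset (Fin n × Fin n) :=
  Finset.univ.filter fun p => p.2 ≤ p.1

lemma aux_density (m σ : ℝ) (v : NNReal) (hvσ : (v : ℝ) = σ ^ 2) (hm : |m| ≤ 1) (hσ : 0 < σ) (x : ℝ) :
    |x| * gaussianPDFReal m v x ≤ (1 + σ) / σ * (Real.sqrt (2 * Real.pi))⁻¹ := by
  simp only [gaussianPDFReal_def]
  have hsq : Real.sqrt (2 * Real.pi * (v : ℝ))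
      = Real.sqrt (2 * Real.pi) * σ := by
    rw [hvσ]
    rw [Real.sqrt_mul (by positivity), Real.sqrt_sq hσ.le]
  rw [hsq, hvσ]
  change |x| * ((Real.sqrt (2 * Real.pi) * σ)⁻¹ * Real.exp (-(x - m) ^ 2 / (2 * σ ^ 2))) ≤ _
  set g := |x - m| / σ with hg
  have hg0 : 0 ≤ g := by positivity
  have hx : |x| ≤ 1 + σ * g := by
    have : σ * g = |x - m| := by rw [hg]; field_simp
    rw [this]
    have := abs_add_le m (x - m)
    simp only [add_sub_cancel] at this
    linarith
  have he : -(x - m) ^ 2 / (2 * σ ^ 2) = -(g ^ 2 / 2) := by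
    rw [hg, div_pow, sq_abs]; field_simp
  rw [he]
  have h1 : Real.exp (-(g ^ 2 / 2)) ≤ 1 := by
    apply Real.exp_le_one_iff.2; nlinarith [sq_nonneg g]
  have h2 : g * Real.exp (-(g ^ 2 / 2)) ≤ 1 := by
    rw [Real.exp_neg, ← div_eq_mul_inv, div_le_one (Real.exp_pos _)]
    have := Real.add_one_le_exp (g ^ 2 / 2)
    nlinarith [sq_nonneg (g - 1)]
  have h3 : |x| * Real.exp (-(g ^ 2 / 2)) ≤ 1 + σ := by
    calc |x| * Real.exp (-(g ^ 2 / 2)) ≤ (1 + σ * g) * Real.exp (-(g ^ 2 / 2)) := by gcongr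
      _ = Real.exp (-(g ^ 2 / 2)) + σ * (g * Real.exp (-(g ^ 2 / 2))) := by ring
      _ ≤ 1 + σ * 1 := by gcongr
      _ = 1 + σ := by ring
  calc |x| * ((Real.sqrt (2 * Real.pi) * σ)⁻¹ * Real.exp (-(g ^ 2 / 2)))
      = (|x| * Real.exp (-(g ^ 2 / 2))) * (Real.sqrt (2 * Real.pi) * σ)⁻¹ := by ring
    _ ≤ (1 + σ) * (Real.sqrt (2 * Real.pi) * σ)⁻¹ := by gcongr
    _ = _ := by rw [mul_inv]; ring

lemma aux_sqrt : Real.sqrt (2 / Real.pi) = 2 * (Real.sqrt (2 * Real.pi))⁻¹ := by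
  rw [Real.sqrt_eq_iff_mul_self_eq (by positivity) (by positivity), eq_comm]
  have : Real.sqrt (2 * Real.pi) * Real.sqrt (2 * Real.pi) = 2 * Real.pi :=
    Real.mul_self_sqrt (by positivity)
  calc 2 * (Real.sqrt (2 * Real.pi))⁻¹ * (2 * (Real.sqrt (2 * Real.pi))⁻¹)
      = 4 * (Real.sqrt (2 * Real.pi) * Real.sqrt (2 * Real.pi))⁻¹ := by rw [mul_inv]; ring
    _ = _ := by rw [this]; field_simp; norm_num

lemma aux_gauss (m σ : ℝ) (v : NNReal) (hvσ : (v : ℝ) = σ ^ 2) (hm : |m| ≤ 1) (hσ : 0 < σ) (s : ℝ) (hs : 1 < s) (α β : ℝ) :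
    gaussianReal m v {x | s * |α * x + β| < |α * x|}
      ≤ ENNReal.ofReal ((1 + σ) / σ * Real.sqrt (2 / Real.pi) / (s - 1)) := by
  by_cases hα : α = 0
  · have : {x | s * |α * x + β| < |α * x|} = ∅ := by
      ext x
      simp only [hα, zero_mul, zero_add, abs_zero, Set.mem_ofPred_eq, Set.mem_empty_iff_false,
        iff_false, not_lt]
      positivity
    rw [this]; simp
  obtain ⟨z, hz⟩ : ∃ z, β = -(α * z) := ⟨-β / α, by field_simp⟩
  have hset : {x | s * |α * x + β| < |α * x|} = {x | s * |x - z| < |x|} := by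
    ext x
    have : α * x + β = α * (x - z) := by rw [hz]; ring
    simp only [Set.mem_ofPred_eq, this, abs_mul]
    have hα' : 0 < |α| := abs_pos.2 hα
    constructor
    · intro h; nlinarith
    · intro h; nlinarith
  rw [hset]
  by_cases hz0 : z = 0
  · have : {x | s * |x - z| < |x|} = ∅ := by
      ext x
      simp only [hz0, sub_zero, Set.mem_ofPred_eq, Set.mem_empty_iff_false, iff_false, not_lt]
      nlinarith [abs_nonneg x]
    rw [this]; simp
  have hzp : 0 < |z| := abs_pos.2 hz0
  set K := (1 + σ) / σ * (Real.sqrt (2 * Real.pi))⁻¹ with hK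
  have hK0 : 0 ≤ K := by positivity
  have hs2 : 0 < s ^ 2 - 1 := by nlinarith
  have hv : v ≠ 0 := by
    intro h
    rw [h, NNReal.coe_zero] at hvσ
    exact (by positivity : σ ^ 2 ≠ 0) hvσ.symm
  have hsub : {x | s * |x - z| < |x|} ⊆
      Metric.closedBall (z * s ^ 2 / (s ^ 2 - 1)) (|z| * s / (s ^ 2 - 1)) := by
    intro x hx
    simp only [Set.mem_ofPred_eq] at hx
    rw [Metric.mem_closedBall, Real.dist_eq]
    apply abs_le_of_sq_le_sq _ (by positivity) 
    have h1 : (s * |x - z|) ^ 2 ≤ |x| ^ 2 := by gcongr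
    rw [mul_pow, sq_abs, sq_abs] at h1
    have e1 : (x - z * s ^ 2 / (s ^ 2 - 1)) ^ 2 - (|z| * s / (s ^ 2 - 1)) ^ 2
        = (s ^ 2 * (x - z) ^ 2 - x ^ 2) / (s ^ 2 - 1) := by
      rw [div_pow, mul_pow, sq_abs]
      field_simp
      ring
    have : (s ^ 2 * (x - z) ^ 2 - x ^ 2) / (s ^ 2 - 1) ≤ 0 :=
      div_nonpos_of_nonpos_of_nonneg (by linarith) hs2.le
    linarith
  have hmeas : MeasurableSet {x : ℝ | s * |x - z| < |x|} :=
    measurableSet_lt (by fun_prop) (by fun_prop)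
  have hdens : ∀ x ∈ {x : ℝ | s * |x - z| < |x|},
      gaussianPDF m v x ≤ ENNReal.ofReal (K * (s + 1) / (|z| * s)) := by
    intro x hx
    simp only [Set.mem_ofPred_eq] at hx
    simp only [gaussianPDF_def]
    apply ENNReal.ofReal_le_ofReal
    have h1 := aux_density m σ v hvσ hm hσ x
    have h2 : |z| * s ≤ |x| * (s + 1) := by
      have h3 : |z| ≤ |x| + |x - z| := by
        have := abs_sub x (x - z)
        simpa using this
      nlinarith
    set f := gaussianPDFReal m v x with hf
    have hf0 : 0 ≤ f := gaussianPDFReal_nonneg _ _ _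
    rw [le_div_iff₀ (by positivity)]
    calc f * (|z| * s) ≤ f * (|x| * (s + 1)) := by gcongr
      _ = (|x| * f) * (s + 1) := by ring
      _ ≤ K * (s + 1) := by gcongr
  rw [gaussianReal_apply _ hv]
  calc ∫⁻ x in {x | s * |x - z| < |x|}, gaussianPDF m v x
      ≤ ∫⁻ x in {x | s * |x - z| < |x|}, ENNReal.ofReal (K * (s + 1) / (|z| * s)) :=
        setLIntegral_mono' hmeas hdens
    _ = ENNReal.ofReal (K * (s + 1) / (|z| * s)) * volume {x : ℝ | s * |x - z| < |x|} := by
        rw [setLIntegral_const]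
    _ ≤ ENNReal.ofReal (K * (s + 1) / (|z| * s)) * ENNReal.ofReal (2 * (|z| * s / (s ^ 2 - 1))) := by
        gcongr
        exact (measure_mono hsub).trans (by rw [Real.volume_closedBall])
    _ = ENNReal.ofReal ((1 + σ) / σ * Real.sqrt (2 / Real.pi) / (s - 1)) := by
        rw [← ENNReal.ofReal_mul (by positivity), aux_sqrt]
        congr 1
        have e1 : (1 + σ) / σ * (2 * (Real.sqrt (2 * Real.pi))⁻¹) = 2 * K := by rw [hK]; ring
        rw [e1]
        have : s - 1 ≠ 0 := by linarith
        have : s ^ 2 - 1 ≠ 0 := hs2.ne'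
        have e2 : s ^ 2 - 1 = (s - 1) * (s + 1) := by ring
        have : s + 1 ≠ 0 := by linarith
        rw [e2]
        field_simp

/-- one-coordinate Fubini bound -/
lemma aux_fubini {ι : Type*} [Fintype ι] [DecidableEq ι] (μ : ι → Measure ℝ)
    [∀ i, IsProbabilityMeasure (μ i)] (e : ι) (E : Set (ι → ℝ)) (hE : MeasurableSet E)
    (C : ℝ≥0∞) (h : ∀ ω, μ e {x | Function.update ω e x ∈ E} ≤ C) :
    Measure.pi μ E ≤ C := by
  have hf : Measurable (E.indicator (1 : (ι → ℝ) → ℝ≥0∞)) := measurable_one.indicator hE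
  rw [← lintegral_indicator_one hE]
  have ω0 : ι → ℝ := fun _ => 0
  rw [lintegral_eq_lmarginal_univ ω0]
  have hu : (Finset.univ : Finset ι) = insert e (Finset.univ.erase e) := by simp
  rw [hu, lmarginal_insert' _ hf (by simp)]
  calc _ ≤ (lmarginal μ (Finset.univ.erase e) (fun _ => C)) ω0 := by
        apply lmarginal_mono
        intro ω
        have hm : MeasurableSet {x | Function.update ω e x ∈ E} :=
          (measurable_update ω) hE
        have : ∀ x, E.indicator (1 : (ι → ℝ) → ℝ≥0∞) (Function.update ω e x)
            = {x | Function.update ω e x ∈ E}.indicator 1 x := by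
          intro x; simp [Set.indicator]
        simp only [this]
        rw [lintegral_indicator_one hm]
        exact h ω
    _ = C := by
        rw [lmarginal]; simp

lemma le_of_forall_pos_le_add_ofReal_aux {x : ℝ≥0∞} {B : ℝ} (hB : 0 ≤ B)
    (h : ∀ ε : ℝ, 0 < ε → x ≤ ENNReal.ofReal (B + ε)) : x ≤ ENNReal.ofReal B := by
  apply ENNReal.le_of_forall_pos_le_add
  intro ε hε _
  refine (h ε (by exact_mod_cast hε)).trans ?_
  rw [ENNReal.ofReal_add hB (by positivity)]
  simp

lemma aux_cwCond_le {ι : Type*} [Fintype ι] [DecidableEq ι] (D : Set (ι → ℝ)) (F : (ι → ℝ) → ℝ)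
    (a : ι → ℝ) (F' : (ι → ℝ) →L[ℝ] ℝ) (hF : HasFDerivAt F F' a) (hFa : F a ≠ 0) :
    cwCond D (fun x (_ : Unit) => F x) a
      ≤ ENNReal.ofReal (∑ e, |a e * F' (Pi.single e 1) / F a|) := by
  set B := ∑ e, |a e * F' (Pi.single e 1) / F a| with hB
  have hB0 : 0 ≤ B := Finset.sum_nonneg fun _ _ => abs_nonneg _
  have hFp : 0 < |F a| := abs_pos.2 hFa
  apply le_of_forall_pos_le_add_ofReal_aux hB0
  intro ε hε
  -- little-o
  set c := ε * |F a| / (‖a‖ + 1) with hc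
  have hc0 : 0 < c := by positivity
  have ho := (hasFDerivAt_iff_isLittleO.1 hF).def hc0
  obtain ⟨r, hr, hball⟩ := Metric.eventually_nhds_iff.1 ho
  set δ := r / (2 * (‖a‖ + 1)) with hδ
  have hδ0 : 0 < δ := by positivity
  rw [cwCond]
  refine iInf₂_le_of_le (ENNReal.ofReal δ) (by simpa using hδ0) ?_
  refine iSup₂_le ?_
  rintro x ⟨-, hx, hxa⟩
  have hfin : cwDist x a ≠ ⊤ := ne_top_of_le_ne_top ENNReal.ofReal_ne_top hx
  set η := (cwDist x a).toReal with hη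
  have hη0 : 0 ≤ η := ENNReal.toReal_nonneg
  have hηd : cwDist x a = ENNReal.ofReal η := (ENNReal.ofReal_toReal hfin).symm
  have hηδ : η ≤ δ := by
    rw [hηd] at hx
    exact (ENNReal.ofReal_le_ofReal_iff hδ0.le).1 hx
  have hcoord : ∀ i, |x i - a i| ≤ η * |a i| := by
    intro i
    have h1 : (if a i ≠ 0 then ENNReal.ofReal (|x i - a i| / |a i|)
       else if x i = a i then 0 else ⊤) ≤ cwDist x a := by
      rw [cwDist]; exact le_iSup (fun i => if a i ≠ 0 then ENNReal.ofReal (|x i - a i| / |a i|)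
       else if x i = a i then 0 else ⊤) i
    by_cases hi : a i = 0
    · by_cases hxi : x i = a i
      · simp [hxi, hi]
      · simp [hi] at h1
        rw [hi] at hxi
        simp [hxi] at h1
        exact absurd h1 hfin
    · rw [if_pos hi, hηd, ENNReal.ofReal_le_ofReal_iff hη0,
        div_le_iff₀ (abs_pos.2 hi)] at h1
      exact h1
  have hηp : 0 < η := by
    rcases hη0.lt_or_eq with h | h
    · exact h
    · exfalso; apply hxa; funext i
      have := hcoord i
      rw [← h, zero_mul] at this
      exact sub_eq_zero.1 (abs_eq_zero.1 (le_antisymm this (abs_nonneg _)))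
  have hnorm : ‖x - a‖ ≤ η * ‖a‖ := by
    rw [pi_norm_le_iff_of_nonneg (by positivity)]
    intro i
    rw [Pi.sub_apply, Real.norm_eq_abs]
    refine (hcoord i).trans ?_
    gcongr
    exact norm_le_pi_norm a i
  have hdist : dist x a < r := by
    rw [dist_eq_norm]
    have : η * ‖a‖ ≤ δ * (‖a‖ + 1) := by gcongr; linarith
    have h2 : δ * (‖a‖ + 1) = r / 2 := by rw [hδ]; field_simp
    linarith
  have hlo := hball hdist
  rw [Real.norm_eq_abs] at hlo
  have hlin : |F' (x - a)| ≤ η * (B * |F a|) := by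
    have e1 : x - a = ∑ e, (x e - a e) • (Pi.single e (1 : ℝ) : ι → ℝ) := by
      rw [← Finset.univ_sum_single (x - a)]
      refine Finset.sum_congr rfl fun e _ => ?_
      rw [← Pi.single_smul]; simp
    rw [e1, map_sum, hB, Finset.sum_mul, Finset.mul_sum]
    refine (Finset.abs_sum_le_sum_abs _ _).trans (Finset.sum_le_sum fun e _ => ?_)
    rw [map_smul, smul_eq_mul, abs_mul, abs_div, abs_mul, div_mul_cancel₀ _ hFp.ne', ← mul_assoc]
    gcongr
    exact hcoord e
  have hFx : |F x - F a| ≤ (B + ε) * |F a| * η := by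
    have h1 : |F x - F a| ≤ |F x - F a - F' (x - a)| + |F' (x - a)| := by
      have := abs_add_le (F x - F a - F' (x - a)) (F' (x - a))
      simpa using this
    have h2 : c * ‖x - a‖ ≤ ε * |F a| * η := by
      calc c * ‖x - a‖ ≤ c * (η * (‖a‖ + 1)) := by
            gcongr; exact hnorm.trans (by gcongr; linarith)
        _ = ε * |F a| * η := by rw [hc]; field_simp
    linarith
  have hnum : cwDist (fun _ : Unit => F x) (fun _ : Unit => F a) ≤ ENNReal.ofReal ((B + ε) * η) := by
    rw [cwDist]
    refine iSup_le fun _ => ?_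
    rw [if_pos hFa]
    apply ENNReal.ofReal_le_ofReal
    rw [div_le_iff₀ hFp]
    linarith
  have hBe : 0 ≤ B + ε := by positivity
  rw [hηd]
  apply ENNReal.div_le_of_le_mul
  rw [← ENNReal.ofReal_mul hBe]
  exact hnum

/-- determinant of a matrix whose entries are coordinates of `a` -/
noncomputable def auxDet {n : ℕ} {ι : Type*} (φ : Fin n → Fin n → ι) (a : ι → ℝ) : ℝ :=
  (Matrix.of fun i j => a (φ i j)).det

noncomputable def auxDl {ι : Type*} [DecidableEq ι] (f : (ι → ℝ) → ℝ) (a : ι → ℝ) (e : ι) : ℝ :=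
  f (Function.update a e 1) - f (Function.update a e 0)

lemma auxDet_affine {n : ℕ} {ι : Type*} [DecidableEq ι] (φ : Fin n → Fin n → ι)
    (hφ : ∀ i j i' j', φ i j = φ i' j' → i = i' ∧ j = j') (a : ι → ℝ) (e : ι) (s : ℝ) :
    auxDet φ (Function.update a e s)
      = auxDl (auxDet φ) a e * s + auxDet φ (Function.update a e 0) := by
  by_cases he : ∃ i j, φ i j = e
  · obtain ⟨i, j, rfl⟩ := he
    have key : ∀ s : ℝ, (Matrix.of fun i' j' => Function.update a (φ i j) s (φ i' j')) =
        (Matrix.of fun i' j' => a (φ i' j')).updateRow i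
          ((Function.update (fun j' => a (φ i j')) j 0) + s • (Pi.single j (1 : ℝ))) := by
      intro s
      ext i' j'
      by_cases hi : i' = i
      · subst hi
        by_cases hj : j' = j
        · subst hj; simp
        · have : φ i' j' ≠ φ i' j := fun h => hj (hφ _ _ _ _ h).2
          simp [Function.update_of_ne this, Function.update_of_ne hj, Pi.single_eq_of_ne hj]
      · have : φ i' j' ≠ φ i j := fun h => hi (hφ _ _ _ _ h).1
        simp [Function.update_of_ne this, Matrix.updateRow_ne hi]
    have key2 : ∀ s : ℝ, auxDet φ (Function.update a (φ i j) s) = 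
        ((Matrix.of fun i' j' => a (φ i' j')).updateRow i
          (Function.update (fun j' => a (φ i j')) j 0)).det + s *
        ((Matrix.of fun i' j' => a (φ i' j')).updateRow i (Pi.single j (1 : ℝ))).det := by
      intro s
      rw [auxDet, key, Matrix.det_updateRow_add, Matrix.det_updateRow_smul]
    rw [auxDl, key2 s, key2 1, key2 0]; ring
  · have key : ∀ s : ℝ, auxDet φ (Function.update a e s) = auxDet φ a := by
      intro s
      rw [auxDet, auxDet]
      congr 1; ext i' j'
      have : φ i' j' ≠ e := fun h => he ⟨_, _, h⟩
      simp [Function.update_of_ne this]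
    rw [auxDl, key s, key 1, key 0]; ring

lemma auxDet_affine_self {n : ℕ} {ι : Type*} [DecidableEq ι] (φ : Fin n → Fin n → ι)
    (hφ : ∀ i j i' j', φ i j = φ i' j' → i = i' ∧ j = j') (a : ι → ℝ) (e : ι) :
    auxDet φ a = auxDl (auxDet φ) a e * a e + auxDet φ (Function.update a e 0) := by
  have := auxDet_affine φ hφ a e (a e)
  rwa [Function.update_eq_self] at this

lemma auxDet_differentiable {n : ℕ} {ι : Type*} [Fintype ι] (φ : Fin n → Fin n → ι) :
    Differentiable ℝ (auxDet φ) := by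
  have : auxDet φ = fun a : ι → ℝ => ∑ τ : Equiv.Perm (Fin n),
      ((Equiv.Perm.sign τ : ℤ) : ℝ) * ∏ i, a (φ (τ i) i) := by
    funext a; rw [auxDet, Matrix.det_apply']; rfl
  rw [this]
  fun_prop

lemma auxDet_hasDerivAt {n : ℕ} {ι : Type*} [Fintype ι] [DecidableEq ι] (φ : Fin n → Fin n → ι)
    (hφ : ∀ i j i' j', φ i j = φ i' j' → i = i' ∧ j = j') (a : ι → ℝ) (e : ι) (s : ℝ) :
    HasDerivAt (fun s => auxDet φ (Function.update a e s)) (auxDl (auxDet φ) a e) s := by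
  have : (fun s => auxDet φ (Function.update a e s)) =
      fun s => auxDl (auxDet φ) a e * s + auxDet φ (Function.update a e 0) := by
    funext s; exact auxDet_affine φ hφ a e s
  rw [this]
  simpa using ((hasDerivAt_id s).const_mul (auxDl (auxDet φ) a e)).add_const
    (auxDet φ (Function.update a e 0))

/-- index map of the numerator matrix -/
def auxN {n : ℕ} (k : Fin n) (i j : Fin n) : (Fin n × Fin n) ⊕ Fin n :=
  if j = k then Sum.inr i else Sum.inl (i, j)

def auxD {n : ℕ} (i j : Fin n) : (Fin n × Fin n) ⊕ Fin n := Sum.inl (i, j)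

lemma auxN_inj {n : ℕ} (k : Fin n) : ∀ i j i' j', auxN k i j = auxN k i' j' → i = i' ∧ j = j' := by
  intro i j i' j' h
  unfold auxN at h
  split_ifs at h with h1 h2 h2
  · exact ⟨by simpa using h, by rw [h1, h2]⟩
  · simpa using h

lemma auxD_inj {n : ℕ} : ∀ i j i' j' : Fin n, auxD i j = auxD i' j' → i = i' ∧ j = j' := by
  intro i j i' j' h
  simpa [auxD] using h

lemma aux_F_eq {n : ℕ} (k : Fin n) (x : (Fin n × Fin n) ⊕ Fin n → ℝ) :
    (Matrix.mulVec (funToMat' x)⁻¹ (funToVec x)) k = auxDet (auxN k) x / auxDet auxD x := by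
  have hD : (funToMat' x).det = auxDet auxD x := rfl
  have hN : ((funToMat' x).updateCol k (funToVec x)).det = auxDet (auxN k) x := by
    rw [auxDet]; congr 1; ext i j
    by_cases h : j = k
    · subst h; simp [auxN, funToVec]
    · simp [auxN, h, funToMat']
  rw [Matrix.inv_def, Matrix.smul_mulVec, ← Matrix.cramer_eq_adjugate_mulVec, Pi.smul_apply,
    Matrix.cramer_apply, hN, hD, Ring.inverse_eq_inv', smul_eq_mul]
  ring

lemma aux_cLin_le {n : ℕ} (k : Fin n) (A : Matrix (Fin n) (Fin n) ℝ) (b : Fin n → ℝ)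
    (hD : auxDet auxD (pairToFun A b) ≠ 0) (hN : auxDet (auxN k) (pairToFun A b) ≠ 0) :
    cLin k A b ≤ ENNReal.ofReal (∑ e,
      |pairToFun A b e * auxDl (auxDet (auxN k)) (pairToFun A b) e / auxDet (auxN k) (pairToFun A b)
       - pairToFun A b e * auxDl (auxDet auxD) (pairToFun A b) e / auxDet auxD (pairToFun A b)|) := by
  set a := pairToFun A b with ha
  have hFe : (fun x (_ : Unit) => (Matrix.mulVec (funToMat' x)⁻¹ (funToVec x)) k)
      = fun (x : (Fin n × Fin n) ⊕ Fin n → ℝ) (_ : Unit) =>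
        (fun x => auxDet (auxN k) x / auxDet auxD x) x := by
    funext x _; exact aux_F_eq k x
  rw [cLin, hFe, ← ha]
  have hdiff : DifferentiableAt ℝ (fun x => auxDet (auxN k) x / auxDet auxD x) a := by
    have h1 : DifferentiableAt ℝ (auxDet (auxN k)) a := (auxDet_differentiable _).differentiableAt
    have h2 : DifferentiableAt ℝ (auxDet (auxD (n := n))) a :=
      (auxDet_differentiable _).differentiableAt
    fun_prop (disch := exact hD)
  refine (aux_cwCond_le _ _ a _ hdiff.hasFDerivAt (div_ne_zero hN hD)).trans_eq ?_
  congr 1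
  refine Finset.sum_congr rfl fun e _ => ?_
  congr 1
  have h1 : HasDerivAt (fun s => auxDet (auxN k) (Function.update a e s) /
      auxDet auxD (Function.update a e s))
      (fderiv ℝ (fun x => auxDet (auxN k) x / auxDet auxD x) a (Pi.single e 1)) (a e) := by
    have hd : HasFDerivAt (fun x => auxDet (auxN k) x / auxDet auxD x)
      (fderiv ℝ (fun x => auxDet (auxN k) x / auxDet auxD x) a) (Function.update a e (a e)) := by
      rw [Function.update_eq_self]; exact hdiff.hasFDerivAt
    exact hd.comp_hasDerivAt (a e) (hasDerivAt_update a e (a e))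
  have h2 := (auxDet_hasDerivAt (auxN k) (auxN_inj k) a e (a e)).fun_div
    (auxDet_hasDerivAt auxD auxD_inj a e (a e)) (by rwa [Function.update_eq_self])
  rw [h1.unique h2]
  simp only [Function.update_eq_self]
  field_simp

lemma aux_gauss_sum (n : ℕ) : 2 * ∑ i ∈ Finset.range n, (i + 1) = n * (n + 1) := by
  induction n with
  | zero => simp
  | succ m ih => rw [Finset.sum_range_succ, mul_add, ih]; ring

def AuxTri {n : ℕ} (a : (Fin n × Fin n) ⊕ Fin n → ℝ) : Prop :=
  ∀ i j : Fin n, i < j → a (Sum.inl (i, j)) = 0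

def auxE {n : ℕ} (k : Fin n) : Finset ((Fin n × Fin n) ⊕ Fin n) :=
  ((triPattern n).erase (k, k)).disjSum Finset.univ

lemma triPattern_card (n : ℕ) : 2 * (triPattern n).card = n * (n + 1) := by
  have h : (triPattern n).card = ∑ i : Fin n, ((i : ℕ) + 1) := by
    rw [triPattern, Finset.card_filter, ← Finset.univ_product_univ, Finset.sum_product]
    refine Finset.sum_congr rfl fun i _ => ?_
    rw [← Finset.card_filter]
    have : (Finset.univ.filter fun j : Fin n => j ≤ i) = Finset.Iic i := by ext; simp
    rw [this, Fin.card_Iic]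
  rw [h, Fin.sum_univ_eq_sum_range (fun i => i + 1) n]
  exact aux_gauss_sum n

lemma auxE_card {n : ℕ} (k : Fin n) : 2 * ((auxE k).card : ℝ) = n * (n + 1) + 2 * n - 2 := by
  have hk : (k, k) ∈ triPattern n := by simp [triPattern]
  have h1 : (auxE k).card + 1 = (triPattern n).card + n := by
    have := Finset.card_erase_add_one hk
    rw [auxE, Finset.card_disjSum, Finset.card_univ, Fintype.card_fin]
    omega
  have h2 := triPattern_card n
  have h1' : ((auxE k).card : ℝ) + 1 = (triPattern n).card + n := by exact_mod_cast h1
  have h2' : 2 * ((triPattern n).card : ℝ) = n * (n + 1) := by exact_mod_cast h2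
  linarith

lemma auxD_tri {n : ℕ} (a : (Fin n × Fin n) ⊕ Fin n → ℝ) (ha : AuxTri a) :
    auxDet auxD a = ∏ i, a (Sum.inl (i, i)) := by
  rw [auxDet, Matrix.det_of_isLowerTriangular]
  · rfl
  · intro i j hij
    exact ha i j (by simpa using hij)

lemma aux_dlD {n : ℕ} (a : (Fin n × Fin n) ⊕ Fin n → ℝ) (ha : AuxTri a)
    (hD : auxDet auxD a ≠ 0) (e : (Fin n × Fin n) ⊕ Fin n) :
    a e * auxDl (auxDet auxD) a e / auxDet auxD a
      = Sum.elim (fun p : Fin n × Fin n => if p.1 = p.2 then (1 : ℝ) else 0) (fun _ => 0) e := by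
  have haff := auxDet_affine_self auxD auxD_inj a e
  have h0 : AuxTri (Function.update a e 0) := by
    intro i j hij
    by_cases h : Sum.inl (i, j) = e
    · rw [← h]; simp
    · rw [Function.update_of_ne h]; exact ha i j hij
  rcases e with ⟨i, j⟩ | i
  · by_cases hij : i = j
    · subst hij
      have : auxDet auxD (Function.update a (Sum.inl (i, i)) 0) = 0 := by
        rw [auxD_tri _ h0]
        exact Finset.prod_eq_zero (Finset.mem_univ i) (by simp)
      rw [this, add_zero, mul_comm] at haff
      rw [← haff, div_self hD]; simp
    · have : auxDet auxD (Function.update a (Sum.inl (i, j)) 0) = auxDet auxD a := by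
        rw [auxD_tri _ h0, auxD_tri _ ha]
        refine Finset.prod_congr rfl fun l _ => ?_
        rw [Function.update_of_ne]
        intro h
        simp only [Sum.inl.injEq, Prod.mk.injEq] at h
        exact hij (h.1.symm.trans h.2)
      have h2 : a (Sum.inl (i, j)) * auxDl (auxDet auxD) a (Sum.inl (i, j)) = 0 := by
        rw [mul_comm]; linarith
      rw [h2]; simp [hij]
  · have : auxDet auxD (Function.update a (Sum.inr i) 0) = auxDet auxD a := by
      rw [auxD_tri _ h0, auxD_tri _ ha]
      refine Finset.prod_congr rfl fun l _ => ?_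
      rw [Function.update_of_ne (by simp)]
    have h2 : a (Sum.inr i) * auxDl (auxDet auxD) a (Sum.inr i) = 0 := by
      rw [mul_comm]; linarith
    rw [h2]; simp

lemma aux_dlN {n : ℕ} (k : Fin n) (a : (Fin n × Fin n) ⊕ Fin n → ℝ) (ha : AuxTri a)
    (e : (Fin n × Fin n) ⊕ Fin n) (he : e ∉ auxE k) :
    a e * auxDl (auxDet (auxN k)) a e = 0 := by
  rcases e with ⟨i, j⟩ | i
  · by_cases hij : i < j
    · rw [ha i j hij, zero_mul]
    · simp only [auxE, Finset.inl_mem_disjSum, Finset.mem_erase, triPattern, Finset.mem_filter,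
        Finset.mem_univ, true_and, not_and, not_le, ne_eq] at he
      have : (i, j) = (k, k) := by
        by_contra h; exact hij (he h)
      have haff := auxDet_affine_self (auxN k) (auxN_inj k) a (Sum.inl (i, j))
      have h2 : auxDet (auxN k) (Function.update a (Sum.inl (i, j)) 0) = auxDet (auxN k) a := by
        rw [auxDet, auxDet]; congr 1; ext i' j'
        simp only [Matrix.of_apply]
        rw [Function.update_of_ne]
        rw [this, auxN]
        split_ifs with h
        · simp
        · intro h3; apply h; simp at h3; exact h3.2
      rw [mul_comm]; linarith
  · exact absurd (by simp [auxE]) he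

lemma aux_sum_le {n : ℕ} (k : Fin n) (a : (Fin n × Fin n) ⊕ Fin n → ℝ) (ha : AuxTri a)
    (hD : auxDet auxD a ≠ 0) :
    ∑ e, |a e * auxDl (auxDet (auxN k)) a e / auxDet (auxN k) a
       - a e * auxDl (auxDet auxD) a e / auxDet auxD a|
    ≤ n + ∑ e ∈ auxE k, |a e * auxDl (auxDet (auxN k)) a e / auxDet (auxN k) a| := by
  have h1 : ∑ e ∈ auxE k, |a e * auxDl (auxDet (auxN k)) a e / auxDet (auxN k) a|
      = ∑ e, |a e * auxDl (auxDet (auxN k)) a e / auxDet (auxN k) a| := by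
    apply Finset.sum_subset (Finset.subset_univ _)
    intro e _ he
    rw [aux_dlN k a ha e he]; simp
  have h2 : ∑ e, |a e * auxDl (auxDet auxD) a e / auxDet auxD a| = n := by
    simp_rw [aux_dlD a ha hD]
    rw [Fintype.sum_sum_type, Fintype.sum_prod_type]
    simp [apply_ite abs]
  rw [h1, ← h2, ← Finset.sum_add_distrib]
  refine Finset.sum_le_sum fun e _ => ?_
  rw [add_comm]
  exact abs_sub _ _

lemma aux_exists {n : ℕ} (A : Matrix (Fin n) (Fin n) ℝ) (b : Fin n → ℝ) (t s : ℝ)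
    (ha : AuxTri (pairToFun A b)) (hD : auxDet auxD (pairToFun A b) ≠ 0)
    (hN : ∀ k, auxDet (auxN k) (pairToFun A b) ≠ 0)
    (hs : ∀ k : Fin n, (n : ℝ) + (auxE k).card * s ≤ t)
    (h : ENNReal.ofReal t < cLinMax A b) :
    ∃ k, ∃ e ∈ auxE k, s * |auxDet (auxN k) (pairToFun A b)|
      < |auxDl (auxDet (auxN k)) (pairToFun A b) e * pairToFun A b e| := by
  rw [cLinMax, lt_iSup_iff] at h
  obtain ⟨k, hk⟩ := h
  refine ⟨k, ?_⟩
  by_contra! hcon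
  have h1 := (hk.trans_le (aux_cLin_le k A b hD (hN k))).trans_le
    (ENNReal.ofReal_le_ofReal (aux_sum_le k _ ha hD))
  have h2 := ENNReal.ofReal_lt_ofReal_iff'.1 h1
  have h3 : ∑ e ∈ auxE k, |pairToFun A b e * auxDl (auxDet (auxN k)) (pairToFun A b) e
      / auxDet (auxN k) (pairToFun A b)| ≤ (auxE k).card * s := by
    rw [← nsmul_eq_mul]
    apply Finset.sum_le_card_nsmul
    intro e he
    rw [abs_div, div_le_iff₀ (abs_pos.2 (hN k)), mul_comm (pairToFun A b e)]
    exact hcon e he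
  linarith [hs k, h2.1]

lemma aux_alpha {n : ℕ} (k : Fin n) (a : (Fin n × Fin n) ⊕ Fin n → ℝ) (ha : AuxTri a)
    (hd : ∀ i, a (Sum.inl (i, i)) ≠ 0) : auxDl (auxDet (auxN k)) a (Sum.inr k) ≠ 0 := by
  set A0 : Matrix (Fin n) (Fin n) ℝ := Matrix.of fun i j => a (auxN k i j) with hA0
  have key : ∀ x : ℝ, auxDet (auxN k) (Function.update a (Sum.inr k) x) =
      (A0.updateCol k ((Function.update (fun i => a (Sum.inr i)) k 0)
        + x • (Pi.single k (1 : ℝ)))).det := by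
    intro x
    rw [auxDet]
    congr 1
    ext i j
    by_cases hj : j = k
    · subst hj
      by_cases hi : i = j
      · subst hi; simp [auxN]
      · have : (Sum.inr i : (Fin n × Fin n) ⊕ Fin n) ≠ Sum.inr j := by simpa using hi
        simp [auxN, Function.update_of_ne this, Function.update_of_ne hi, Pi.single_eq_of_ne hi]
    · simp [auxN, hj, hA0]
  have h1 : auxDl (auxDet (auxN k)) a (Sum.inr k) = (A0.updateCol k (Pi.single k (1 : ℝ))).det := by
    rw [auxDl, key 1, key 0, Matrix.det_updateCol_add, Matrix.det_updateCol_add,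
      Matrix.det_updateCol_smul, Matrix.det_updateCol_smul]
    ring
  rw [h1, Matrix.det_of_isLowerTriangular]
  · rw [Finset.prod_ne_zero_iff]
    intro i _
    by_cases hi : i = k
    · subst hi; simp
    · simp [hA0, auxN, hi, hd i]
  · intro i j hij
    have hij : i < j := by simpa using hij
    by_cases hj : j = k
    · subst hj
      simp [Pi.single_eq_of_ne hij.ne]
    · simp [hA0, auxN, hj, ha i j hij]

abbrev AuxI (n : ℕ) := (triPattern n) ⊕ Fin n

def auxPsi {n : ℕ} : AuxI n → (Fin n × Fin n) ⊕ Fin n := Sum.map Subtype.val id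

def auxExt {n : ℕ} (ω : AuxI n → ℝ) : (Fin n × Fin n) ⊕ Fin n → ℝ :=
  Sum.elim (fun p => if h : p ∈ triPattern n then ω (Sum.inl ⟨p, h⟩) else 0)
    (fun i => ω (Sum.inr i))

lemma auxExt_psi {n : ℕ} (ω : AuxI n → ℝ) (e : AuxI n) : auxExt ω (auxPsi e) = ω e := by
  rcases e with ⟨p, hp⟩ | i
  · simp [auxExt, auxPsi, hp]
  · rfl

lemma auxExt_update {n : ℕ} (ω : AuxI n → ℝ) (e : AuxI n) (x : ℝ) :
    auxExt (Function.update ω e x) = Function.update (auxExt ω) (auxPsi e) x := by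
  funext d
  by_cases h : d = auxPsi e
  · subst h; rw [auxExt_psi]; simp
  · rw [Function.update_of_ne h]
    rcases d with p | i
    · by_cases hp : p ∈ triPattern n
      · have : (Sum.inl ⟨p, hp⟩ : AuxI n) ≠ e := by
          rintro rfl; exact h rfl
        simp [auxExt, hp, Function.update_of_ne this]
      · simp [auxExt, hp]
    · have : (Sum.inr i : AuxI n) ≠ e := by
        rintro rfl; exact h rfl
      simp [auxExt, Function.update_of_ne this]

lemma auxExt_tri {n : ℕ} (ω : AuxI n → ℝ) : AuxTri (auxExt ω) := by
  intro i j hij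
  have : (i, j) ∉ triPattern n := by simp [triPattern, hij]
  simp [auxExt, this]

lemma auxExt_measurable {n : ℕ} : Measurable (auxExt (n := n)) := by
  rw [measurable_pi_iff]
  rintro (p | i)
  · by_cases hp : p ∈ triPattern n
    · simp only [auxExt, Sum.elim_inl, hp, dite_true]; fun_prop
    · simp only [auxExt, Sum.elim_inl, hp, dite_false]; fun_prop
  · simp only [auxExt, Sum.elim_inr]; fun_prop

lemma auxDet_measurable {n : ℕ} {ι : Type*} [Fintype ι] (φ : Fin n → Fin n → ι) :
    Measurable (auxDet φ) := (auxDet_differentiable φ).continuous.measurable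

lemma auxDl_measurable {n : ℕ} {ι : Type*} [Fintype ι] [DecidableEq ι] (φ : Fin n → Fin n → ι)
    (e : ι) : Measurable (fun a => auxDl (auxDet φ) a e) := by
  unfold auxDl
  have h : ∀ x : ℝ, Measurable fun a : ι → ℝ => Function.update a e x := fun x =>
    (Continuous.update continuous_id e continuous_const).measurable
  exact ((auxDet_measurable φ).comp (h 1)).sub ((auxDet_measurable φ).comp (h 0))

section meas
variable {n : ℕ} (μ : AuxI n → Measure ℝ) [∀ i, IsProbabilityMeasure (μ i)]

lemma aux_null_coord (hμ : ∀ e x, μ e {x} = 0) (e : AuxI n) :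
    Measure.pi μ {ω | ω e = 0} = 0 := by
  classical
  apply le_antisymm _ (zero_le)
  apply aux_fubini μ e _ (measurableSet_eq_fun (by fun_prop) (by fun_prop))
  intro ω
  simp only [Set.mem_ofPred_eq, Function.update_self]
  exact (hμ e 0).le

lemma aux_null_D (hμ : ∀ e x, μ e {x} = 0) :
    Measure.pi μ {ω | ∃ i, auxExt ω (Sum.inl (i, i)) = 0} = 0 := by
  have : {ω : AuxI n → ℝ | ∃ i, auxExt ω (Sum.inl (i, i)) = 0}
      = ⋃ i : Fin n, {ω | ω (Sum.inl ⟨(i, i), by simp [triPattern]⟩) = 0} := by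
    ext ω
    simp only [Set.mem_ofPred_eq, Set.mem_iUnion]
    refine exists_congr fun i => ?_
    rw [← auxExt_psi ω (Sum.inl ⟨(i, i), by simp [triPattern]⟩)]
    rfl
  rw [this, measure_iUnion_null_iff]
  intro i
  exact aux_null_coord μ hμ _

lemma aux_null_N (hμ : ∀ e x, μ e {x} = 0) (k : Fin n) :
    Measure.pi μ {ω | (∀ i, auxExt ω (Sum.inl (i, i)) ≠ 0) ∧ auxDet (auxN k) (auxExt ω) = 0} = 0 := by
  classical
  apply le_antisymm _ (zero_le)
  have hm : MeasurableSet {ω : AuxI n → ℝ | (∀ i, auxExt ω (Sum.inl (i, i)) ≠ 0) ∧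
      auxDet (auxN k) (auxExt ω) = 0} := by
    apply MeasurableSet.inter
    · have : {ω : AuxI n → ℝ | ∀ i, auxExt ω (Sum.inl (i, i)) ≠ 0}
        = ⋂ i, {ω : AuxI n → ℝ | auxExt ω (Sum.inl (i, i)) = 0}ᶜ := by
        ext; simp
      change MeasurableSet {ω : AuxI n → ℝ | ∀ i, auxExt ω (Sum.inl (i, i)) ≠ 0}
      rw [this]
      refine MeasurableSet.iInter fun i => (measurableSet_eq_fun ?_ measurable_const).compl
      exact (measurable_pi_apply _).comp auxExt_measurable
    · exact measurableSet_eq_fun ((auxDet_measurable _).comp auxExt_measurable) measurable_const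
  apply aux_fubini μ (Sum.inr k) _ hm
  intro ω
  by_cases hd : ∀ i, auxExt ω (Sum.inl (i, i)) ≠ 0
  · have hα := aux_alpha k (auxExt ω) (auxExt_tri ω) hd
    set α := auxDl (auxDet (auxN k)) (auxExt ω) (Sum.inr k) with hαd
    set β := auxDet (auxN k) (Function.update (auxExt ω) (Sum.inr k) 0) with hβ
    refine (measure_mono ?_).trans (hμ (Sum.inr k) (-β / α)).le
    rintro x ⟨-, hx⟩
    rw [auxExt_update] at hx
    change auxDet (auxN k) (Function.update (auxExt ω) (Sum.inr k) x) = 0 at hx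
    rw [auxDet_affine _ (auxN_inj k)] at hx
    rw [Set.mem_singleton_iff, eq_div_iff hα]
    linarith
  · refine (measure_mono (t := ∅) ?_).trans (by simp)
    rintro x ⟨hx, -⟩
    apply hd
    intro i
    have := hx i
    rw [auxExt_update, Function.update_of_ne (by simp [auxPsi])] at this
    exact this

lemma aux_B (k : Fin n) (e : (Fin n × Fin n) ⊕ Fin n) (he : e ∈ auxE k) (s : ℝ) (C : ℝ≥0∞)
    (hμ : ∀ e α β, μ e {x | s * |α * x + β| < |α * x|} ≤ C) :
    Measure.pi μ {ω | s * |auxDet (auxN k) (auxExt ω)|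
      < |auxDl (auxDet (auxN k)) (auxExt ω) e * auxExt ω e|} ≤ C := by
  classical
  obtain ⟨e', rfl⟩ : ∃ e' : AuxI n, auxPsi e' = e := by
    rcases e with p | i
    · simp only [auxE, Finset.inl_mem_disjSum, Finset.mem_erase] at he
      exact ⟨Sum.inl ⟨p, he.2⟩, rfl⟩
    · exact ⟨Sum.inr i, rfl⟩
  apply aux_fubini μ e'
  · apply measurableSet_lt
    · have := (auxDet_measurable (auxN k)).comp auxExt_measurable
      exact (continuous_abs.measurable.comp this).const_mul s
    · apply continuous_abs.measurable.comp
      exact ((auxDl_measurable (auxN k) _).comp auxExt_measurable).mul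
        ((measurable_pi_apply _).comp auxExt_measurable)
  · intro ω
    refine le_trans (measure_mono ?_) (hμ e' (auxDl (auxDet (auxN k)) (auxExt ω) (auxPsi e'))
      (auxDet (auxN k) (Function.update (auxExt ω) (auxPsi e') 0)))
    intro x hx
    simp only [Set.mem_ofPred_eq] at hx ⊢
    rw [auxExt_update, Function.update_self, auxDet_affine _ (auxN_inj k)] at hx
    simpa only [auxDl, Function.update_idem] using hx

end meas

def auxBad (n : ℕ) (s : ℝ) : Set ((Fin n × Fin n) ⊕ Fin n → ℝ) :=
  {a | ¬ AuxTri a} ∪ ({a | ∃ i, a (Sum.inl (i, i)) = 0} ∪ ((⋃ k, {a | auxDet (auxN k) a = 0}) ∪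
    ⋃ k, ⋃ e ∈ auxE k, {a | s * |auxDet (auxN k) a| < |auxDl (auxDet (auxN k)) a e * a e|}))

lemma auxBad_measurable (n : ℕ) (s : ℝ) : MeasurableSet (auxBad n s) := by
  refine MeasurableSet.union ?_ (MeasurableSet.union ?_ (MeasurableSet.union ?_ ?_))
  · have : {a : (Fin n × Fin n) ⊕ Fin n → ℝ | ¬ AuxTri a}
        = (⋂ i, ⋂ j, ⋂ (_ : i < j), {a | a (Sum.inl (i, j)) = 0})ᶜ := by
      ext a; simp [AuxTri]
    rw [this]
    refine (MeasurableSet.iInter fun i => MeasurableSet.iInter fun j =>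
      MeasurableSet.iInter fun _ => ?_).compl
    exact measurableSet_eq_fun (measurable_pi_apply _) measurable_const
  · have : {a : (Fin n × Fin n) ⊕ Fin n → ℝ | ∃ i, a (Sum.inl (i, i)) = 0}
        = ⋃ i, {a | a (Sum.inl (i, i)) = 0} := by
      ext a; simp
    rw [this]
    exact MeasurableSet.iUnion fun i =>
      measurableSet_eq_fun (measurable_pi_apply _) measurable_const
  · exact MeasurableSet.iUnion fun k => measurableSet_eq_fun (auxDet_measurable _) measurable_const
  · refine MeasurableSet.iUnion fun k => Finset.measurableSet_biUnion _ fun e _ => ?_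
    apply measurableSet_lt
    · exact (continuous_abs.measurable.comp (auxDet_measurable (auxN k))).const_mul s
    · apply continuous_abs.measurable.comp
      exact (auxDl_measurable (auxN k) _).mul (measurable_pi_apply _)

lemma aux_subset {n : ℕ} (t s : ℝ) (hs : ∀ k : Fin n, (n : ℝ) + (auxE k).card * s ≤ t)
    (A : Matrix (Fin n) (Fin n) ℝ) (b : Fin n → ℝ) (h : ENNReal.ofReal t < cLinMax A b) :
    pairToFun A b ∈ auxBad n s := by
  by_contra hcon
  simp only [auxBad, Set.mem_union, Set.mem_ofPred_eq, Set.mem_iUnion, not_or, not_not,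
    not_exists] at hcon
  obtain ⟨h1, h2, h3, h4⟩ := hcon
  have hD : auxDet auxD (pairToFun A b) ≠ 0 := by
    rw [auxD_tri _ h1, Finset.prod_ne_zero_iff]
    exact fun i _ => h2 i
  obtain ⟨k, e, he, hlt⟩ := aux_exists A b t s h1 hD h3 hs h
  exact h4 k e he hlt

lemma aux_pi_bad {n : ℕ} (μ : AuxI n → Measure ℝ) [∀ i, IsProbabilityMeasure (μ i)]
    (hμ0 : ∀ e x, μ e {x} = 0) (s : ℝ) (C : ℝ≥0∞)
    (hμ : ∀ e α β, μ e {x | s * |α * x + β| < |α * x|} ≤ C) :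
    Measure.pi μ (auxExt ⁻¹' auxBad n s) ≤ ∑ k : Fin n, (auxE k).card * C := by
  have hsub : auxExt ⁻¹' auxBad n s ⊆ {ω | ∃ i, auxExt ω (Sum.inl (i, i)) = 0} ∪
      ((⋃ k, {ω | (∀ i, auxExt ω (Sum.inl (i, i)) ≠ 0) ∧ auxDet (auxN k) (auxExt ω) = 0}) ∪
      ⋃ k, ⋃ e ∈ auxE k, {ω | s * |auxDet (auxN k) (auxExt ω)|
      < |auxDl (auxDet (auxN k)) (auxExt ω) e * auxExt ω e|}) := by
    intro ω hω
    simp only [auxBad, Set.mem_preimage, Set.mem_union, Set.mem_ofPred_eq, Set.mem_iUnion] at hω ⊢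
    rcases hω with h | h | ⟨k, h⟩ | h
    · exact absurd (auxExt_tri ω) h
    · exact Or.inl h
    · by_cases hd : ∃ i, auxExt ω (Sum.inl (i, i)) = 0
      · exact Or.inl hd
      · push Not at hd
        exact Or.inr (Or.inl ⟨k, hd, h⟩)
    · exact Or.inr (Or.inr h)
  refine (measure_mono hsub).trans ((measure_union_le _ _).trans ?_)
  rw [aux_null_D μ hμ0, zero_add]
  refine (measure_union_le _ _).trans ?_
  rw [measure_iUnion_null (fun k => aux_null_N μ hμ0 k), zero_add]
  refine (measure_iUnion_fintype_le _ _).trans (Finset.sum_le_sum fun k _ => ?_)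
  refine (measure_biUnion_finset_le _ _).trans ?_
  rw [← nsmul_eq_mul]
  exact Finset.sum_le_card_nsmul _ _ _ fun e he => aux_B μ k e he s C hμ

lemma aux_transfer {n : ℕ} (Lbar : Matrix (Fin n) (Fin n) ℝ) (bbar : Fin n → ℝ) (σ : ℝ)
    (v : NNReal) (hv : v = ⟨σ ^ 2, sq_nonneg σ⟩)
    (W : Set ((Fin n × Fin n) ⊕ Fin n → ℝ)) (hW : MeasurableSet W) :
    (sparseGaussian (triPattern n) Lbar σ).prod (vecGaussian bbar σ)
      {p | pairToFun p.1 p.2 ∈ W}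
    = Measure.pi (fun e : AuxI n => gaussianReal
        (Sum.elim (fun p : triPattern n => Lbar p.1.1 p.1.2) bbar e) v) (auxExt ⁻¹' W) := by
  have hG : Measurable (fun (g : triPattern n → ℝ) => (Matrix.of fun i j =>
      if h : (i, j) ∈ triPattern n then g ⟨(i, j), h⟩ else 0 : Matrix (Fin n) (Fin n) ℝ)) := by
    refine measurable_pi_iff.2 fun i => measurable_pi_iff.2 fun j => ?_
    by_cases h : (i, j) ∈ triPattern n
    · simp only [Matrix.of_apply, h, dite_true]; fun_prop
    · simp only [Matrix.of_apply, h, dite_false]; fun_prop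
  have hmp1 : MeasurePreserving (fun (g : triPattern n → ℝ) => (Matrix.of fun i j =>
      if h : (i, j) ∈ triPattern n then g ⟨(i, j), h⟩ else 0 : Matrix (Fin n) (Fin n) ℝ))
      (Measure.pi fun p : triPattern n => gaussianReal (Lbar p.1.1 p.1.2) v)
      (sparseGaussian (triPattern n) Lbar σ) := ⟨hG, by rw [hv]; rfl⟩
  have hmp2 : MeasurePreserving (id : (Fin n → ℝ) → (Fin n → ℝ))
      (Measure.pi fun i => gaussianReal (bbar i) v) (vecGaussian bbar σ) :=
    ⟨measurable_id, by rw [hv, Measure.map_id]; rfl⟩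
  have : SFinite (vecGaussian bbar σ) := by
    have h := hmp2.map_eq
    rw [← h]; infer_instance
  have : SFinite (sparseGaussian (triPattern n) Lbar σ) := by
    rw [← hmp1.map_eq]; infer_instance
  have hmp := (hmp1.prod hmp2).comp (measurePreserving_sumPiEquivProdPi
    (fun e : AuxI n => gaussianReal
        (Sum.elim (fun p : triPattern n => Lbar p.1.1 p.1.2) bbar e) v))
  have hpm : Measurable (fun p : Matrix (Fin n) (Fin n) ℝ × (Fin n → ℝ) => pairToFun p.1 p.2) := by
    rw [measurable_pi_iff]
    rintro (⟨i, j⟩ | i)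
    · exact (measurable_pi_apply j).comp ((measurable_pi_apply i).comp measurable_fst)
    · exact (measurable_pi_apply i).comp measurable_snd
  exact (hmp.measure_preimage (hpm hW).nullMeasurableSet).symm

/-- Let `L̄` be lower triangular with `‖L̄‖_max ≤ 1`, `b̄ ∈ ℝⁿ` with
`‖b̄‖_∞ ≤ 1`, `σ > 0`, and let `L ~ N_T(L̄, σ²Id)` (only the entries `l_{ij}` with `i ≥ j`
are random Gaussians, the rest are `0`) and `b ~ N(b̄, σ²Id)` be independent. Then for
every real `t > n(n+1)`,
`Prob{c(L,b) > t} ≤ ((1+σ)/σ)·(n³(n+1)²/(t − n(n+1)))·√(2/π)`,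
where `c(L,b) = max_k c_k(L,b)`. -/
theorem prob_cLinMax_triangular_gt {n : ℕ}
    (Lbar : Matrix (Fin n) (Fin n) ℝ) (htri : ∀ i j : Fin n, i < j → Lbar i j = 0)
    (hmax : ∀ i j, |Lbar i j| ≤ 1) (bbar : Fin n → ℝ) (hbmax : ∀ i, |bbar i| ≤ 1)
    (σ : ℝ) (hσ : 0 < σ) (t : ℝ) (ht : (n : ℝ) * (n + 1) < t) :
    (sparseGaussian (triPattern n) Lbar σ).prod (vecGaussian bbar σ)
        {p | ENNReal.ofReal t < cLinMax p.1 p.2}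
      ≤ ENNReal.ofReal ((1 + σ) / σ
          * ((n : ℝ) ^ 3 * ((n : ℝ) + 1) ^ 2 / (t - (n : ℝ) * (n + 1)))
          * Real.sqrt (2 / Real.pi)) := by
  rcases Nat.eq_zero_or_pos n with hn | hn
  · subst hn
    have : {p : Matrix (Fin 0) (Fin 0) ℝ × (Fin 0 → ℝ) |
        ENNReal.ofReal t < cLinMax p.1 p.2} = ∅ := by
      ext p; simp [cLinMax]
    rw [this]; simp
  have hn1 : (1 : ℝ) ≤ n := by exact_mod_cast hn
  obtain ⟨v, hv⟩ : ∃ v : NNReal, v = ⟨σ ^ 2, sq_nonneg σ⟩ := ⟨_, rfl⟩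
  have hvσ : (v : ℝ) = σ ^ 2 := by rw [hv]; rfl
  have hv0 : v ≠ 0 := by
    intro h
    rw [h, NNReal.coe_zero] at hvσ
    exact (by positivity : σ ^ 2 ≠ 0) hvσ.symm
  set M : ℝ := ((n : ℝ) * (n + 1) + 2 * n - 2) / 2 with hM
  have hM1 : 1 ≤ M := by rw [hM]; nlinarith
  have hcard : ∀ k : Fin n, ((auxE k).card : ℝ) = M := fun k => by
    have := auxE_card k
    rw [hM]; linarith
  have hnat : (n : ℝ) + M ≤ n * (n + 1) := by
    have h12 : 0 ≤ ((n : ℝ) - 1) * (n - 2) := by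
      rcases (by omega : n = 1 ∨ 2 ≤ n) with h | h
      · simp [h]
      · have : (2 : ℝ) ≤ n := by exact_mod_cast h
        exact mul_nonneg (by linarith) (by linarith)
    rw [hM]; nlinarith
  set s : ℝ := (t - n) / M with hs
  have hM0 : 0 < M := by linarith
  have hs1 : 1 < s := by rw [hs, one_lt_div hM0]; linarith
  have hsM : M * s = t - n := by rw [hs]; field_simp
  have hsub : {p : Matrix (Fin n) (Fin n) ℝ × (Fin n → ℝ) | ENNReal.ofReal t < cLinMax p.1 p.2}
      ⊆ {p | pairToFun p.1 p.2 ∈ auxBad n s} := by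
    intro p hp
    refine aux_subset t s (fun k => ?_) p.1 p.2 hp
    rw [hcard k, hsM]; linarith
  refine (measure_mono hsub).trans ?_
  rw [aux_transfer Lbar bbar σ v hv _ (auxBad_measurable n s)]
  refine (aux_pi_bad _ ?_ s
    (ENNReal.ofReal ((1 + σ) / σ * Real.sqrt (2 / Real.pi) / (s - 1))) ?_).trans ?_
  · intro e x
    have := nullSingletonClass_gaussianReal (μ := Sum.elim
      (fun p : triPattern n => Lbar p.1.1 p.1.2) bbar e) hv0
    exact measure_singleton x
  · intro e α β
    refine aux_gauss _ σ v hvσ ?_ hσ s hs1 α β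
    rcases e with p | i
    · exact hmax _ _
    · exact hbmax _
  · have hK : 0 ≤ (1 + σ) / σ * Real.sqrt (2 / Real.pi) := by positivity
    set K := (1 + σ) / σ * Real.sqrt (2 / Real.pi) with hKd
    have hs10 : 0 < s - 1 := by linarith
    have h1 : ∀ k : Fin n, ((auxE k).card : ℝ≥0∞) = ENNReal.ofReal M := fun k => by
      rw [← hcard k, ENNReal.ofReal_natCast]
    simp_rw [h1]
    rw [Finset.sum_const, Finset.card_univ, Fintype.card_fin, nsmul_eq_mul,
      ← ENNReal.ofReal_natCast n, ← ENNReal.ofReal_mul hM0.le, ← ENNReal.ofReal_mul (by positivity)]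
    apply ENNReal.ofReal_le_ofReal
    have h2 : s - 1 = (t - n - M) / M := by rw [hs]; field_simp
    have hden : 0 < t - n - M := by linarith
    have hden2 : 0 < t - (n : ℝ) * (n + 1) := by linarith
    calc (n : ℝ) * (M * (K / (s - 1))) = K * (n * M ^ 2 / (t - n - M)) := by
          rw [h2]; field_simp
      _ ≤ K * (n * ((n : ℝ) * (n + 1)) ^ 2 / (t - (n : ℝ) * (n + 1))) := by
          have hb1 : t - (n : ℝ) * (n + 1) ≤ t - n - M := by linarith
          have hb2 : M ≤ (n : ℝ) * (n + 1) := by linarith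
          gcongr
      _ = _ := by rw [hKd]; ring
end
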